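/- Let f ∈ C²(S¹×ℝ×ℝ, ℝ), let e⁻ be an equilibrium and γ⁺ a classical periodic solution of minimal period p > 0 of u_t = u_xx + f(x,u,u_x) with γ⁺(·,t) ≠ e⁻ for all t. Let u be a bounded classical solution on S¹×ℝ and a ∈ ℝ be such that ‖u(·,t) − e⁻‖_{C¹(S¹)} → 0 as t → −∞ and ‖u(·,t) − γ⁺(·,a+t)‖_{C¹(S¹)} → 0 as t → +∞, and assume u(·,t) ≠ e⁻ and u(·,t) ≠ γ⁺(·,a+t) for all t. Then for every t ∈ ℝ one has z(u(·,t) − γ⁺(·,a+t)) ≤ z(γ⁺(·,a) − e⁻) ≤ z(u(·,t) − e⁻). -/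

import Mathlib

open Set

/-- Zero number (number of strict sign changes) of a `1`-periodic function on `ℝ`,
viewed as a function on the circle `S¹ = ℝ/ℤ`. -/
noncomputable def zeroNumber (φ : ℝ → ℝ) : ℕ∞ :=
  ⨆ k ∈ {k : ℕ | ∃ x : Fin k → ℝ, StrictMono x ∧ (∀ i j : Fin k, x j < x i + 1) ∧
      ∀ i : Fin k, φ (x i) * φ (x (finRotate k i)) < 0}, (k : ℕ∞)

/-- An equilibrium of `u_t = u_xx + f(x,u,u_x)` on the circle. -/
def IsEquilibrium (f : ℝ → ℝ → ℝ → ℝ) (e : ℝ → ℝ) : Prop :=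
  Function.Periodic e 1 ∧ ContDiff ℝ 2 e ∧
    ∀ x, deriv (deriv e) x + f x (e x) (deriv e x) = 0

/-- A classical solution `u` (written `u t x` for `u(x,t)`) on `S¹ × ℝ` of
`u_t = u_xx + f(x,u,u_x)`. -/
def IsClassicalSolution (f : ℝ → ℝ → ℝ → ℝ) (u : ℝ → ℝ → ℝ) : Prop :=
  (∀ t, Function.Periodic (u t) 1)
  ∧ Continuous (fun p : ℝ × ℝ => u p.1 p.2)
  ∧ (∀ t x : ℝ, DifferentiableAt ℝ (fun s => u s x) t)
  ∧ (∀ t, Differentiable ℝ (u t))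
  ∧ (∀ t, Differentiable ℝ (deriv (u t)))
  ∧ Continuous (fun p : ℝ × ℝ => deriv (fun s => u s p.2) p.1)
  ∧ Continuous (fun p : ℝ × ℝ => deriv (u p.1) p.2)
  ∧ Continuous (fun p : ℝ × ℝ => deriv (deriv (u p.1)) p.2)
  ∧ ∀ t x : ℝ, deriv (fun s => u s x) t
      = deriv (deriv (u t)) x + f x (u t x) (deriv (u t) x)

/-- A classical periodic solution of minimal period `p > 0`. -/
def IsPeriodicSolution (f : ℝ → ℝ → ℝ → ℝ) (γ : ℝ → ℝ → ℝ) (p : ℝ) : Prop :=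
  IsClassicalSolution f γ ∧ 0 < p ∧ (∀ t, γ (t + p) = γ t) ∧
    ∀ q, 0 < q → (∀ t, γ (t + q) = γ t) → p ≤ q

/-!
A difference `w` of two solutions satisfies `|w_t - w_xx| ≤ C (|w| + |w_x|)`. By the maximum
principle every point where `w > 0` is joined backwards in time to earlier ones by a path along
which `w > 0`, and likewise for `w < 0`. Paths issuing from consecutive sign changes cannot cross,
so the zero number of `w` does not increase in time.

Letting `t → ∞` through multiples of the period, `u - e` tends to `γ a - e`, and strict sign
changes of a limit are inherited by its approximants: this is the second inequality. For the first
one, as `t → -∞` the difference `u - γ` is `C¹`-close to `e - γ`, and sign changes of the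
approximant descend to the limit when the zeros of the limit are simple. They are simple at some
time: while the zero number is constant, `w` changes sign just once between consecutive points of a
sign cycle. A steep line in space-time moved from the right until it first meets `{w ≤ 0}` touches
it at a zero which the Hopf lemma shows to be simple, and the strong maximum principle excludes
other zeros.
-/

section

open Filter Function Topology

section Calculus

theorem deriv_deriv_nonneg_of_isLocalMin {g : ℝ → ℝ} {x : ℝ} (hg : ContinuousAt g x)
    (hmin : IsLocalMin g x) : 0 ≤ deriv (deriv g) x := by
  by_contra! hneg
  have hmax : IsLocalMax g x := isLocalMax_of_deriv_deriv_neg hneg hmin.deriv_eq_zero hg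
  have hconst : g =ᶠ[𝓝 x] fun _ => g x := by
    filter_upwards [hmin, hmax] with y hle hge using le_antisymm hge hle
  have hzero : deriv (deriv g) x = 0 := by simpa using hconst.deriv.deriv_eq
  exact hneg.ne hzero

theorem nonpos_of_hasDerivAt_of_eventually_le_left {g : ℝ → ℝ} {g' t : ℝ} (hg : HasDerivAt g g' t)
    (hle : ∀ᶠ s in 𝓝[<] t, g t ≤ g s) : g' ≤ 0 := by
  have hslope := (hasDerivWithinAt_iff_tendsto_slope' self_notMem_Iio).1
    (hg.hasDerivWithinAt (s := Iio t))
  refine le_of_tendsto hslope ?_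
  filter_upwards [hle, self_mem_nhdsWithin] with s hgs hst
  rw [slope_def_field]
  exact div_nonpos_of_nonneg_of_nonpos (sub_nonneg.2 hgs) (sub_nonpos.2 (le_of_lt hst))

end Calculus

/-- The class of functions to which the zero number theory below applies: `w t x` satisfies, locally
uniformly, the differential inequality `|w_t - w_xx| ≤ C (|w| + |w_x|)`. It contains the
differences of two classical solutions of one semilinear equation, and is closed under negation
and space and time translations. -/
structure IsParabolic (w : ℝ → ℝ → ℝ) : Prop where
  continuous : Continuous fun q : ℝ × ℝ => w q.1 q.2
  differentiable_time : ∀ x, Differentiable ℝ fun t => w t x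
  differentiable : ∀ t, Differentiable ℝ (w t)
  differentiable_deriv : ∀ t, Differentiable ℝ (deriv (w t))
  continuous_deriv : Continuous fun q : ℝ × ℝ => deriv (w q.1) q.2
  exists_bound : ∀ K : Set (ℝ × ℝ), IsCompact K → ∃ C ≥ (0 : ℝ), ∀ t x, (t, x) ∈ K →
    |deriv (fun s => w s x) t - deriv (deriv (w t)) x| ≤ C * (|w t x| + |deriv (w t) x|)

namespace IsParabolic

variable {w ψ : ℝ → ℝ → ℝ}

theorem continuous_time (h : IsParabolic w) (x : ℝ) : Continuous fun t => w t x :=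
  h.continuous.comp (Continuous.prodMk_left x)

theorem neg (h : IsParabolic w) : IsParabolic fun t x => -w t x where
  continuous := h.continuous.neg
  differentiable_time x := (h.differentiable_time x).neg
  differentiable t := (h.differentiable t).neg
  differentiable_deriv t := by simpa only [deriv.fun_neg'] using (h.differentiable_deriv t).fun_neg
  continuous_deriv := by simpa only [deriv.fun_neg'] using h.continuous_deriv.fun_neg
  exists_bound K hK := by
    obtain ⟨C, hC, hbound⟩ := h.exists_bound K hK
    refine ⟨C, hC, fun t x hq => ?_⟩
    simpa only [deriv.fun_neg', abs_neg, neg_sub_neg, abs_sub_comm] using hbound t x hq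

/-- First and second order conditions where `ψ` touches `w` from below. -/
theorem deriv_le_of_isLocalMin_sub (h : IsParabolic w) {s y ψt ψxx : ℝ} {ψx : ℝ → ℝ}
    (hψt : HasDerivAt (fun r => ψ r y) ψt s) (hψx : ∀ x, HasDerivAt (ψ s) (ψx x) x)
    (hψxx : HasDerivAt ψx ψxx y) (hspace : IsLocalMin (fun x => w s x - ψ s x) y)
    (htime : ∀ᶠ r in 𝓝[<] s, w s y - ψ s y ≤ w r y - ψ r y) :
    deriv (w s) y = ψx y ∧ deriv (fun r => w r y) s ≤ ψt ∧ ψxx ≤ deriv (deriv (w s)) y := by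
  have hdiff : ∀ x, HasDerivAt (fun x => w s x - ψ s x) (deriv (w s) x - ψx x) x :=
    fun x => (h.differentiable s x).hasDerivAt.fun_sub (hψx x)
  have hderiv : deriv (fun x => w s x - ψ s x) = fun x => deriv (w s) x - ψx x :=
    funext fun x => (hdiff x).deriv
  have hcrit := hspace.deriv_eq_zero
  have hconvex := deriv_deriv_nonneg_of_isLocalMin (hdiff y).continuousAt hspace
  have hdecr := nonpos_of_hasDerivAt_of_eventually_le_left
    ((h.differentiable_time y s).hasDerivAt.fun_sub hψt) htime
  rw [hderiv] at hcrit
  rw [hderiv, ((h.differentiable_deriv s y).hasDerivAt.fun_sub hψxx).deriv] at hconvex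
  exact ⟨sub_eq_zero.1 hcrit, sub_nonpos.1 hdecr, sub_nonneg.1 hconvex⟩

/-- A positive local maximum of `exp (-(C + 1) t) w` would force `w_t ≥ (C + 1) w` and
`w_xx ≤ 0`, against `w_t - w_xx ≤ C w`. -/
theorem not_isLocalMax_exp_mul (h : IsParabolic w) {C s y : ℝ}
    (hbound : |deriv (fun r => w r y) s - deriv (deriv (w s)) y| ≤ C * (|w s y| + |deriv (w s) y|))
    (hpos : 0 < w s y) (hspace : IsLocalMax (w s) y) :
    ¬ ∀ᶠ r in 𝓝[<] s, Real.exp (-(C + 1) * r) * w r y ≤ Real.exp (-(C + 1) * s) * w s y := by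
  intro htime
  have hψt :
      HasDerivAt (fun r => -(Real.exp ((C + 1) * (r - s)) * w s y)) (-((C + 1) * w s y)) s := by
    have := ((((hasDerivAt_id s).sub_const s).const_mul (C + 1)).exp.mul_const (w s y)).fun_neg
    simpa using this
  have htouch := h.neg.deriv_le_of_isLocalMin_sub
    (ψ := fun r _ => -(Real.exp ((C + 1) * (r - s)) * w s y)) (ψx := 0) (ψxx := 0) hψt
    (fun x => hasDerivAt_const x _) (hasDerivAt_const y 0)
    (hspace.mono fun x hx => by simpa using hx) ?_
  · obtain ⟨hx, ht, hxx⟩ := htouch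
    simp only [deriv.fun_neg', Pi.zero_apply, neg_eq_zero] at hx ht hxx
    rw [hx, abs_zero, add_zero, abs_of_pos hpos] at hbound
    linarith [le_of_abs_le hbound]
  · filter_upwards [htime] with r hr
    have hmul := mul_le_mul_of_nonneg_left hr (Real.exp_pos ((C + 1) * r)).le
    rw [← mul_assoc, ← mul_assoc, ← Real.exp_add, ← Real.exp_add,
      show (C + 1) * r + -(C + 1) * r = 0 by ring,
      show (C + 1) * r + -(C + 1) * s = (C + 1) * (r - s) by ring, Real.exp_zero, one_mul] at hmul
    simpa using hmul

end IsParabolic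

/-- A path in space-time from `p` forward in time to `q`, written as a graph over the time
interval, along which `w` is positive. Only the values of the path on this interval matter. -/
def PositivePath (w : ℝ → ℝ → ℝ) (p q : ℝ × ℝ) : Prop :=
  p.1 ≤ q.1 ∧ ∃ η : ℝ → ℝ, Continuous η ∧ η p.1 = p.2 ∧ η q.1 = q.2 ∧
    ∀ r ∈ Icc p.1 q.1, 0 < w r (η r)

namespace PositivePath

variable {w : ℝ → ℝ → ℝ} {p q r : ℝ × ℝ}

theorem refl (hp : 0 < w p.1 p.2) : PositivePath w p p :=
  ⟨le_rfl, fun _ => p.2, continuous_const, rfl, rfl, fun s hs => by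
    rwa [le_antisymm hs.2 hs.1]⟩

theorem trans (hpq : PositivePath w p q) (hqr : PositivePath w q r) : PositivePath w p r := by
  obtain ⟨hle, η, hη, hp, hq, hpos⟩ := hpq
  obtain ⟨hle', η', hη', hq', hr', hpos'⟩ := hqr
  refine ⟨hle.trans hle', fun s => if s ≤ q.1 then η s else η' s, ?_, ?_, ?_, fun s hs => ?_⟩
  · refine hη.if_le hη' continuous_id continuous_const fun s hs => ?_
    rw [show s = q.1 from hs, hq, hq']
  · simp only [if_pos hle, hp]
  · rcases hle'.eq_or_lt with heq | hlt
    · simp only [← heq, le_rfl, if_true]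
      rw [hq, ← hq', heq, hr']
    · simp only [if_neg hlt.not_ge, hr']
  · by_cases h : s ≤ q.1
    · simpa only [if_pos h] using hpos s ⟨hs.1, h⟩
    · simpa only [if_neg h] using hpos' s ⟨(not_le.1 h).le, hs.2⟩

theorem of_segment (hpq : p.1 < q.1) (hpos : ∀ z ∈ segment ℝ p q, 0 < w z.1 z.2) :
    PositivePath w p q := by
  have hne : q.1 - p.1 ≠ 0 := (sub_pos.2 hpq).ne'
  refine ⟨hpq.le, fun s => AffineMap.lineMap p.2 q.2 ((s - p.1) / (q.1 - p.1)), ?_, ?_, ?_, ?_⟩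
  · simp only [AffineMap.lineMap_apply]
    fun_prop
  · simp
  · simp [div_self hne]
  · intro s hs
    have hmem : (s - p.1) / (q.1 - p.1) ∈ Icc (0 : ℝ) 1 :=
      ⟨div_nonneg (sub_nonneg.2 hs.1) (sub_pos.2 hpq).le,
        (div_le_one (sub_pos.2 hpq)).2 (sub_le_sub_right hs.2 _)⟩
    have := hpos _ (lineMap_mem_segment ℝ p q hmem)
    rwa [AffineMap.fst_lineMap, AffineMap.snd_lineMap, AffineMap.lineMap_apply (p.1),
      vsub_eq_sub, smul_eq_mul, div_mul_cancel₀ _ hne, vadd_eq_add, sub_add_cancel] at this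

theorem add_int (hper : ∀ t, Periodic (w t) 1) (h : PositivePath w p q) (n : ℤ) :
    PositivePath w (p.1, p.2 + n) (q.1, q.2 + n) := by
  obtain ⟨hle, η, hη, hp, hq, hpos⟩ := h
  refine ⟨hle, fun s => η s + n, by fun_prop, by simp only [hp], by simp only [hq], fun s hs => ?_⟩
  have := (hper s).int_mul n (η s)
  simpa only [← this, mul_one] using hpos s hs

theorem exists_nhds (hw : Continuous fun z : ℝ × ℝ => w z.1 z.2) (hp : 0 < w p.1 p.2) :
    ∃ U ∈ 𝓝 p, ∀ z ∈ U, ∀ z' ∈ U, z.1 < z'.1 → PositivePath w z z' := by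
  obtain ⟨δ, hδ, hball⟩ := Metric.eventually_nhds_iff_ball.1
    (hw.continuousAt.eventually (lt_mem_nhds hp))
  refine ⟨Metric.ball p δ, Metric.ball_mem_nhds p hδ, fun z hz z' hz' hlt => ?_⟩
  exact of_segment hlt fun y hy => hball y ((convex_ball p δ).segment_subset hz hz' hy)

end PositivePath

/-- The points of space-time not before time `t₁` from which a positive path leads to an integer
translate of `(T, x)`. Translates are included to make the set invariant under unit shifts in
space, hence compact modulo these shifts after taking the closure. -/
def positiveBasin (w : ℝ → ℝ → ℝ) (t₁ T x : ℝ) : Set (ℝ × ℝ) :=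
  {q | t₁ ≤ q.1 ∧ ∃ j : ℤ, PositivePath w q (T, x + j)}

section PositiveBasin

variable {w : ℝ → ℝ → ℝ} {t₁ T x : ℝ}

theorem mem_positiveBasin_of_positivePath {p q : ℝ × ℝ} (hp : t₁ ≤ p.1)
    (hpq : PositivePath w p q) (hq : q ∈ positiveBasin w t₁ T x) : p ∈ positiveBasin w t₁ T x :=
  ⟨hp, hq.2.imp fun _ => hpq.trans⟩

theorem fract_mem_positiveBasin (hper : ∀ t, Periodic (w t) 1) {s y : ℝ}
    (hq : (s, y) ∈ positiveBasin w t₁ T x) : (s, Int.fract y) ∈ positiveBasin w t₁ T x := by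
  obtain ⟨hs, j, hpath⟩ := hq
  have hshift := hpath.add_int hper (-⌊y⌋)
  refine ⟨hs, j + -⌊y⌋, ?_⟩
  rwa [Int.cast_neg, ← sub_eq_add_neg, Int.self_sub_floor, add_assoc, ← Int.cast_neg,
    ← Int.cast_add] at hshift

theorem exists_mem_closure_positiveBasin_forall_le (hper : ∀ t, Periodic (w t) 1)
    {G : ℝ × ℝ → ℝ} (hG : Continuous G) (hGper : ∀ s, Periodic (fun y => G (s, y)) 1)
    (hne : (positiveBasin w t₁ T x).Nonempty) :
    ∃ q ∈ closure (positiveBasin w t₁ T x), q ∈ Icc t₁ T ×ˢ Icc (0 : ℝ) 1 ∧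
      ∀ z ∈ positiveBasin w t₁ T x, G z ≤ G q := by
  have hcompact : IsCompact (closure (positiveBasin w t₁ T x) ∩ Icc t₁ T ×ˢ Icc 0 1) :=
    (isCompact_Icc.prod isCompact_Icc).inter_left isClosed_closure
  have hfract : ∀ z ∈ positiveBasin w t₁ T x, (z.1, Int.fract z.2) ∈
      closure (positiveBasin w t₁ T x) ∩ Icc t₁ T ×ˢ Icc 0 1 := fun z hz =>
    ⟨subset_closure (fract_mem_positiveBasin hper hz), ⟨hz.1, hz.2.choose_spec.1⟩,
      Int.fract_nonneg _, (Int.fract_lt_one _).le⟩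
  obtain ⟨z, hz⟩ := hne
  obtain ⟨q, hq, hmax⟩ := hcompact.exists_isMaxOn ⟨_, hfract z hz⟩ hG.continuousOn
  refine ⟨q, hq.1, hq.2, fun z hz => ?_⟩
  have hGfract : G (z.1, Int.fract z.2) = G z := by
    simpa using (hGper z.1).sub_int_mul_eq ⌊z.2⌋ (x := z.2)
  exact hGfract ▸ hmax (hfract z hz)

theorem eventually_mem_positiveBasin (hw : Continuous fun z : ℝ × ℝ => w z.1 z.2) {q : ℝ × ℝ}
    (hq : q ∈ closure (positiveBasin w t₁ T x)) (hpos : 0 < w q.1 q.2) :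
    ∀ᶠ z in 𝓝 q, t₁ ≤ z.1 → z.1 < q.1 → z ∈ positiveBasin w t₁ T x := by
  obtain ⟨U, hU, hpath⟩ := PositivePath.exists_nhds hw hpos
  filter_upwards [hU] with z hz hz₁ hzq
  obtain ⟨z', ⟨hz'U, hlt⟩, hz'⟩ := mem_closure_iff_nhds.1 hq _
    (inter_mem hU (continuous_fst.continuousAt.eventually (lt_mem_nhds hzq)))
  exact mem_positiveBasin_of_positivePath hz₁ (hpath z hz z' hz'U hlt) hz'

theorem exists_initial_mem_positiveBasin (hw : Continuous fun z : ℝ × ℝ => w z.1 z.2) {y : ℝ}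
    (hq : (t₁, y) ∈ closure (positiveBasin w t₁ T x)) (hpos : 0 < w t₁ y) :
    ∃ y', (t₁, y') ∈ positiveBasin w t₁ T x := by
  obtain ⟨U, hU, hpath⟩ := PositivePath.exists_nhds (p := (t₁, y)) hw hpos
  obtain ⟨z, hzU, hz⟩ := mem_closure_iff_nhds.1 hq U hU
  rcases hz.1.eq_or_lt with heq | hlt
  · exact ⟨z.2, heq ▸ hz⟩
  · exact ⟨y, mem_positiveBasin_of_positivePath le_rfl
      (hpath _ (mem_of_mem_nhds hU) z hzU hlt) hz⟩

end PositiveBasin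

namespace IsParabolic

variable {w : ℝ → ℝ → ℝ}

/-- Nearby earlier points belong to the basin, so a maximum over the basin would be local. -/
theorem exists_lt_exp_mul_of_mem_closure (h : IsParabolic w) {C t₁ T x s y : ℝ}
    (hbound : |deriv (fun r => w r y) s - deriv (deriv (w s)) y| ≤ C * (|w s y| + |deriv (w s) y|))
    (hpos : 0 < w s y) (hs : t₁ < s) (hq : (s, y) ∈ closure (positiveBasin w t₁ T x)) :
    ∃ z ∈ positiveBasin w t₁ T x,
      Real.exp (-(C + 1) * s) * w s y < Real.exp (-(C + 1) * z.1) * w z.1 z.2 := by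
  by_contra! hmax
  have hcurry := (eventually_mem_positiveBasin h.continuous hq hpos).curry_nhds
  have hbefore : ∀ᶠ r in 𝓝[<] s, r < s ∧ t₁ ≤ r :=
    eventually_mem_nhdsWithin.and
      (nhdsWithin_le_nhds ((lt_mem_nhds hs).mono fun _ => le_of_lt))
  refine h.not_isLocalMax_exp_mul hbound hpos ?_ ?_
  · have hswap := (eventually_mem_positiveBasin h.continuous hq hpos)
    rw [nhds_prod_eq] at hswap
    filter_upwards [(Filter.eventually_swap_iff.1 hswap).curry] with x' hx'
    have hlim : Tendsto (fun r => Real.exp (-(C + 1) * r) * w r x') (𝓝[<] s)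
        (𝓝 (Real.exp (-(C + 1) * s) * w s x')) := by
      have := h.continuous_time x'
      exact (Continuous.tendsto (by fun_prop) s).mono_left nhdsWithin_le_nhds
    refine le_of_mul_le_mul_left (le_of_tendsto hlim ?_) (Real.exp_pos (-(C + 1) * s))
    filter_upwards [hbefore, nhdsWithin_le_nhds hx'] with r ⟨hrs, hr⟩ hmem
    exact hmax (r, x') (hmem hr hrs)
  · filter_upwards [hbefore, nhdsWithin_le_nhds hcurry] with r ⟨hrs, hr⟩ hmem
    exact hmax (r, y) (hmem.self_of_nhds hr hrs)

theorem exists_positivePath (h : IsParabolic w) (hper : ∀ t, Periodic (w t) 1) {t₁ T x : ℝ}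
    (hT : t₁ ≤ T) (hpos : 0 < w T x) : ∃ y, PositivePath w (t₁, y) (T, x) := by
  obtain ⟨C, -, hbound⟩ := h.exists_bound (Icc t₁ T ×ˢ Icc 0 1) (isCompact_Icc.prod isCompact_Icc)
  have hmem : (T, x) ∈ positiveBasin w t₁ T x :=
    ⟨hT, 0, by simpa using PositivePath.refl (p := (T, x)) hpos⟩
  have hw := h.continuous
  obtain ⟨⟨s, y⟩, hq, hqK, hmax⟩ := exists_mem_closure_positiveBasin_forall_le hper
    (G := fun z => Real.exp (-(C + 1) * z.1) * w z.1 z.2) (by fun_prop)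
    (fun s y => by simp only [hper s y]) ⟨_, hmem⟩
  have hposq : 0 < w s y :=
    pos_of_mul_pos_right ((mul_pos (Real.exp_pos _) hpos).trans_le (hmax _ hmem))
      (Real.exp_pos _).le
  obtain heq | hlt := (show t₁ ≤ s from hqK.1.1).eq_or_lt
  · subst heq
    obtain ⟨y', -, j, hpath⟩ := exists_initial_mem_positiveBasin hw hq hposq
    exact ⟨y' - j, by simpa [sub_eq_add_neg] using hpath.add_int hper (-j)⟩
  · obtain ⟨z, hz, hlt_z⟩ :=
      h.exists_lt_exp_mul_of_mem_closure (hbound s y hqK) hposq hlt hq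
    exact absurd (hmax z hz) hlt_z.not_ge

end IsParabolic

section SignChanges

variable {φ : ℝ → ℝ} {k : ℕ}

theorem exists_equivariant_choice {α : Type*} [AddCommGroup α] {c : α} {P : ℤ → α → Prop}
    (hk : 0 < k) (hP : ∀ i a, P i a → ∀ n : ℤ, P (i + n * k) (a + n • c))
    (hex : ∀ i, ∃ a, P i a) : ∃ Y : ℤ → α, (∀ i, P i (Y i)) ∧ ∀ i, Y (i + k) = Y i + c := by
  choose A hA using hex
  have hk' : (k : ℤ) ≠ 0 := by exact_mod_cast hk.ne'
  refine ⟨fun i => A (i % k) + (i / k) • c, fun i => ?_, fun i => ?_⟩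
  · simpa only [mul_comm (i / k) (k : ℤ), Int.emod_add_mul_ediv] using
      hP (i % k) _ (hA (i % k)) (i / k)
  · simp only [Int.add_emod_right, Int.add_ediv_of_dvd_right dvd_rfl, Int.ediv_self hk', add_smul,
      one_smul, add_assoc]

theorem add_int_mul_of_forall_add {X : ℤ → ℝ} (hX : ∀ i, X (i + k) = X i + 1) (i n : ℤ) :
    X (i + n * k) = X i + n := by
  let X' : AddConstMap ℤ ℝ (k : ℤ) 1 := ⟨X, hX⟩
  have hadd : X (i + n • (k : ℤ)) = X i + n • (1 : ℝ) := AddConstMapClass.map_add_zsmul X' i n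
  rwa [smul_eq_mul, zsmul_one] at hadd

/-- A cyclic sequence of `k` points of the circle at which `φ` changes sign, unrolled to a sequence
in `ℝ` that is indexed by `ℤ` and advances by `1` every `k` steps. For `1`-periodic `φ` these are
the sequences counted by `zeroNumber`. -/
structure IsSignCycle (φ : ℝ → ℝ) (k : ℕ) (X : ℤ → ℝ) : Prop where
  strictMono : StrictMono X
  add_period : ∀ i, X (i + k) = X i + 1
  mul_neg : ∀ i, φ (X i) * φ (X (i + 1)) < 0

namespace IsSignCycle

variable {X : ℤ → ℝ}

theorem pos (h : IsSignCycle φ k X) : 0 < k := by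
  refine Nat.pos_of_ne_zero fun hk => ?_
  simpa [hk] using h.add_period 0

theorem ne_zero (h : IsSignCycle φ k X) (i : ℤ) : φ (X i) ≠ 0 :=
  left_ne_zero_of_mul (h.mul_neg i).ne

theorem add_int_mul (h : IsSignCycle φ k X) (i n : ℤ) : X (i + n * k) = X i + n :=
  add_int_mul_of_forall_add h.add_period i n

theorem shift (h : IsSignCycle φ k X) (j : ℤ) : IsSignCycle φ k fun i => X (i + j) where
  strictMono := h.strictMono.comp fun _ _ hlt => by simpa using hlt
  add_period i := by rw [add_right_comm, h.add_period]
  mul_neg i := by rw [add_right_comm]; exact h.mul_neg _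

theorem exists_of_chain (hφ : Periodic φ 1) {Y : ℕ → ℝ} (hk : 0 < k)
    (hlt : ∀ n < k, Y n < Y (n + 1)) (hclose : Y k = Y 0 + 1)
    (hneg : ∀ n < k, φ (Y n) * φ (Y (n + 1)) < 0) : ∃ X, IsSignCycle φ k X := by
  have hk' : (0 : ℤ) < k := by exact_mod_cast hk
  let X : ℤ → ℝ := fun i => Y (i % k).toNat + (i / k : ℤ)
  have hX_lt : ∀ n < k, ∀ m : ℤ, X (n + m * k) = Y n + m := fun n hn m => by
    have hmod : (n : ℤ) % k = n := Int.emod_eq_of_lt (by omega) (by omega)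
    have hdiv : (n : ℤ) / k = 0 := Int.ediv_eq_zero_of_lt (by omega) (by omega)
    simp [X, hmod, hdiv, Int.add_mul_ediv_right _ _ hk'.ne']
  have hX : ∀ n ≤ k, ∀ m : ℤ, X (n + m * k) = Y n + m := fun n hn m => by
    obtain hn | rfl := hn.lt_or_eq
    · exact hX_lt n hn m
    · have := hX_lt 0 hk (m + 1)
      push_cast at this
      rw [hclose, show (n : ℤ) + m * n = 0 + (m + 1) * n by ring, this]
      ring
  have hdecomp : ∀ i : ℤ, ∃ n < k, ∃ m : ℤ, X i = Y n + m ∧ X (i + 1) = Y (n + 1) + m :=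
      fun i => by
    obtain ⟨n, hn⟩ := Int.eq_ofNat_of_zero_le (Int.emod_nonneg i hk'.ne')
    have hnk : n < k := by have := Int.emod_lt_of_pos i hk'; omega
    have hi : i = n + i / k * k := by rw [← hn, Int.emod_add_ediv_mul]
    refine ⟨n, hnk, i / k, by rw [← hX n hnk.le, ← hi], ?_⟩
    rw [← hX (n + 1) hnk, Nat.cast_succ, add_right_comm, ← hi]
  refine ⟨X, strictMono_int_of_lt_succ fun i => ?_, fun i => ?_, fun i => ?_⟩
  · obtain ⟨n, hn, m, h₀, h₁⟩ := hdecomp i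
    rw [h₀, h₁]
    exact add_lt_add_left (hlt n hn) _
  · simp [X, Int.add_ediv_of_dvd_right dvd_rfl, Int.ediv_self hk'.ne', add_assoc]
  · obtain ⟨n, hn, m, h₀, h₁⟩ := hdecomp i
    have hm : ∀ y, φ (y + m) = φ y := fun y => by simpa using hφ.int_mul m y
    simpa only [h₀, h₁, hm] using hneg n hn

end IsSignCycle

theorem exists_isSignCycle_iff (hφ : Periodic φ 1) (hk : 0 < k) :
    (∃ X, IsSignCycle φ k X) ↔ ∃ x : Fin k → ℝ, StrictMono x ∧ (∀ i j, x j < x i + 1) ∧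
      ∀ i, φ (x i) * φ (x (finRotate k i)) < 0 := by
  obtain ⟨k, rfl⟩ := Nat.exists_eq_succ_of_ne_zero hk.ne'
  have hrotate : ∀ n (hn : n < k), finRotate (k + 1) ⟨n, by omega⟩ = ⟨n + 1, by omega⟩ :=
    fun n hn => finRotate_of_lt hn
  constructor
  · rintro ⟨X, hX⟩
    refine ⟨fun i => X i, fun i j hij => hX.strictMono (by exact_mod_cast hij), fun i j => ?_,
      fun i => ?_⟩
    · rw [← hX.add_period]
      exact hX.strictMono (by omega)
    · have hneg := hX.mul_neg i
      obtain hi | hi := (Nat.le_of_lt_succ i.isLt).lt_or_eq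
      · simpa [hrotate i hi] using hneg
      · have hclose := hX.add_period 0
        have : i = Fin.last k := Fin.ext hi
        subst this
        simp only [Fin.val_last, finRotate_last, Fin.val_zero] at hneg ⊢
        rw [show (k : ℤ) + 1 = 0 + (k + 1 : ℕ) by push_cast; ring, hclose, hφ] at hneg
        simpa using hneg
  · rintro ⟨x, hx, hx_lt, hneg⟩
    refine IsSignCycle.exists_of_chain hφ hk
      (Y := fun n => if h : n < k + 1 then x ⟨n, h⟩ else x 0 + 1) (fun n hn => ?_) (by simp)
      (fun n hn => ?_)
    all_goals obtain hn' | rfl := (Nat.le_of_lt_succ hn).lt_or_eq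
    · simpa [hn, hn'] using hx (show (⟨n, hn⟩ : Fin (k + 1)) < ⟨n + 1, by omega⟩ by simp)
    · simpa using hx_lt 0 ⟨n, hn⟩
    · simpa [hn, hn', hrotate n hn'] using hneg ⟨n, hn⟩
    · simpa [hφ (x 0), show (⟨n, hn⟩ : Fin (n + 1)) = Fin.last n from rfl] using hneg (Fin.last n)

theorem IsSignCycle.le_zeroNumber {X : ℤ → ℝ} (hφ : Periodic φ 1) (h : IsSignCycle φ k X) :
    k ≤ zeroNumber φ :=
  le_iSup₂ (f := fun (k : ℕ) _ => (k : ℕ∞)) k ((exists_isSignCycle_iff hφ h.pos).1 ⟨X, h⟩)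

theorem zeroNumber_le_iff (hφ : Periodic φ 1) {c : ℕ∞} :
    zeroNumber φ ≤ c ↔ ∀ k X, IsSignCycle φ k X → k ≤ c := by
  refine ⟨fun hc k X hX => (hX.le_zeroNumber hφ).trans hc, fun hc => iSup₂_le fun k hk => ?_⟩
  obtain rfl | hpos := k.eq_zero_or_pos
  · simp
  · obtain ⟨X, hX⟩ := (exists_isSignCycle_iff hφ hpos).2 hk
    exact hc k X hX

theorem zeroNumber_mono_of_isSignCycle {ψ : ℝ → ℝ} (hφ : Periodic φ 1) (hψ : Periodic ψ 1)
    (h : ∀ k X, IsSignCycle φ k X → ∃ Y, IsSignCycle ψ k Y) : zeroNumber φ ≤ zeroNumber ψ :=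
  (zeroNumber_le_iff hφ).2 fun k X hX => (h k X hX).choose_spec.le_zeroNumber hψ

theorem exists_isSignCycle_eq_zeroNumber (hφ : Periodic φ 1) (h₀ : zeroNumber φ ≠ 0)
    (htop : zeroNumber φ ≠ ⊤) : ∃ N X, IsSignCycle φ N X ∧ zeroNumber φ = N := by
  have hsup : zeroNumber φ = ⨆ N : {N : ℕ // ∃ X, IsSignCycle φ N X}, (N : ℕ∞) :=
    le_antisymm ((zeroNumber_le_iff hφ).2 fun k X hX =>
        le_iSup (fun N : {N : ℕ // ∃ X, IsSignCycle φ N X} => (N : ℕ∞)) ⟨k, X, hX⟩)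
      (iSup_le fun N => N.2.choose_spec.le_zeroNumber hφ)
  have : Nonempty {N : ℕ // ∃ X, IsSignCycle φ N X} := by
    by_contra! hempty
    exact h₀ (by rw [hsup, iSup_of_empty, bot_eq_zero])
  obtain ⟨⟨N, X, hX⟩, hN⟩ := ENat.exists_eq_iSup_of_lt_top (hsup ▸ lt_top_iff_ne_top.2 htop)
  exact ⟨N, X, hX, hsup.trans hN.symm⟩

theorem zeroNumber_neg : zeroNumber (fun x => -φ x) = zeroNumber φ := by
  simp only [zeroNumber, neg_mul_neg]

theorem mul_nonneg_of_zeroNumber_eq_zero (hφ : Periodic φ 1) (h₀ : zeroNumber φ = 0) (x y : ℝ) :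
    0 ≤ φ x * φ y := by
  by_contra! hneg
  obtain ⟨y', hy', hφy'⟩ := hφ.exists_mem_Ico one_pos y x
  rw [hφy'] at hneg
  have hlt : x < y' := hy'.1.lt_of_ne fun heq => hneg.not_ge (heq ▸ mul_self_nonneg (φ x))
  obtain ⟨X, hX⟩ := IsSignCycle.exists_of_chain (k := 2) hφ
    (Y := fun | 0 => x | 1 => y' | _ => x + 1) two_pos
    (fun n hn => by interval_cases n; exacts [hlt, hy'.2]) rfl
    (fun n hn => by interval_cases n; exacts [hneg, by simpa only [hφ x, mul_comm] using hneg])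
  simpa [h₀] using hX.le_zeroNumber hφ

theorem zeroNumber_le_of_tendsto {ι : Type*} {l : Filter ι} {ψ : ι → ℝ → ℝ} {c : ℕ∞}
    (hlim : ∀ x, Tendsto (fun n => ψ n x) l (𝓝 (φ x)))
    (hle : ∃ᶠ n in l, zeroNumber (ψ n) ≤ c) : zeroNumber φ ≤ c := by
  refine iSup₂_le fun k ⟨x, hmono, hcirc, hneg⟩ => ?_
  have hneg' : ∀ᶠ n in l, ∀ i, ψ n (x i) * ψ n (x (finRotate k i)) < 0 :=
    eventually_all.2 fun i => ((hlim _).mul (hlim _)).eventually (gt_mem_nhds (hneg i))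
  obtain ⟨n, hn, hneg_n⟩ := (hle.and_eventually hneg').exists
  exact (le_iSup₂ (f := fun (k : ℕ) _ => (k : ℕ∞)) k ⟨x, hmono, hcirc, hneg_n⟩).trans hn

end SignChanges

section PathOrder

theorem mul_neg_of_mul_pos {a a' b b' : ℝ} (haa' : a * a' < 0) (hab : 0 < a * b)
    (hab' : 0 < a' * b') : b * b' < 0 := by
  have : 0 < (a * a') * (b * b') := by linarith [mul_pos hab hab']
  exact (neg_iff_neg_of_mul_pos this).1 haa'

theorem lt_left_of_lt_right_of_forall_ne {η η' : ℝ → ℝ} {t₁ T : ℝ} (hη : Continuous η)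
    (hη' : Continuous η') (hT : t₁ ≤ T) (hne : ∀ r ∈ Icc t₁ T, η r ≠ η' r) (hlt : η T < η' T) :
    η t₁ < η' t₁ := by
  by_contra! hge
  obtain ⟨r, hr, heq⟩ := isPreconnected_Icc.intermediate_value₂ (right_mem_Icc.2 hT)
    (left_mem_Icc.2 hT) hη.continuousOn hη'.continuousOn hlt.le hge
  exact hne r hr heq

end PathOrder

namespace IsParabolic

variable {w : ℝ → ℝ → ℝ}

theorem exists_path_mul_pos (h : IsParabolic w) (hper : ∀ t, Periodic (w t) 1) {t₁ T x : ℝ}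
    (hT : t₁ ≤ T) (hne : w T x ≠ 0) :
    ∃ η : ℝ → ℝ, Continuous η ∧ η T = x ∧ ∀ r ∈ Icc t₁ T, 0 < w T x * w r (η r) := by
  rcases hne.lt_or_gt with hneg | hpos
  · obtain ⟨_, -, η, hη, -, hηT, hpos⟩ := h.neg.exists_positivePath
      (fun t x => congrArg Neg.neg (hper t x)) hT (neg_pos.2 hneg)
    exact ⟨η, hη, hηT, fun r hr => mul_pos_of_neg_of_neg hneg (neg_pos.1 (hpos r hr))⟩
  · obtain ⟨_, -, η, hη, -, hηT, hpos_η⟩ := h.exists_positivePath hper hT hpos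
    exact ⟨η, hη, hηT, fun r hr => mul_pos hpos (hpos_η r hr)⟩

theorem exists_isSignCycle_of_le (h : IsParabolic w) (hper : ∀ t, Periodic (w t) 1) {t₁ T : ℝ}
    (hT : t₁ ≤ T) {k : ℕ} {X : ℤ → ℝ} (hX : IsSignCycle (w T) k X) :
    ∃ Y, IsSignCycle (w t₁) k Y := by
  let IsPath (i : ℤ) (η : ℝ → ℝ) : Prop :=
    Continuous η ∧ η T = X i ∧ ∀ r ∈ Icc t₁ T, 0 < w T (X i) * w r (η r)
  have hshift : ∀ i η, IsPath i η → ∀ n : ℤ, IsPath (i + n * k) (η + n • fun _ => (1 : ℝ)) := by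
    intro i η ⟨hη, hηT, hpos⟩ n
    have hw : ∀ r y, w r (y + n) = w r y := fun r y => by simpa using (hper r).int_mul n y
    have hn : n • (fun _ : ℝ => (1 : ℝ)) = fun _ => (n : ℝ) := funext fun _ => by simp
    simp only [IsPath, hn, Pi.add_apply, hX.add_int_mul, hw, hηT]
    exact ⟨hη.add continuous_const, trivial, hpos⟩
  obtain ⟨η, hη, hη_add⟩ := exists_equivariant_choice hX.pos hshift fun i =>
    h.exists_path_mul_pos hper hT (hX.ne_zero i)
  have hneg : ∀ r ∈ Icc t₁ T, ∀ i, w r (η i r) * w r (η (i + 1) r) < 0 := fun r hr i =>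
    mul_neg_of_mul_pos (hX.mul_neg i) ((hη i).2.2 r hr) ((hη (i + 1)).2.2 r hr)
  refine ⟨fun i => η i t₁, strictMono_int_of_lt_succ fun i => ?_,
    fun i => by rw [hη_add, Pi.add_apply], hneg t₁ (left_mem_Icc.2 hT)⟩
  refine lt_left_of_lt_right_of_forall_ne (hη i).1 (hη (i + 1)).1 hT (fun r hr heq => ?_) ?_
  · exact (hneg r hr i).not_ge (heq ▸ mul_self_nonneg _)
  · rw [(hη i).2.1, (hη (i + 1)).2.1]
    exact hX.strictMono (lt_add_one i)

theorem zeroNumber_antitone (h : IsParabolic w) (hper : ∀ t, Periodic (w t) 1) :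
    Antitone fun t => zeroNumber (w t) := fun t₁ T hT =>
  zeroNumber_mono_of_isSignCycle (hper T) (hper t₁) fun _ _ hX =>
    h.exists_isSignCycle_of_le hper hT hX

end IsParabolic

/-- The barrier used in the Hopf boundary lemma along the moving boundary `x + K t = b`, where it
vanishes. For `A` large it is a strict subsolution. -/
noncomputable def hopfBarrier (A K b ε t x : ℝ) : ℝ :=
  ε * (Real.exp (A * (x + K * t - b)) - 1)

section HopfBarrier

variable {A K b ε : ℝ}

theorem hasDerivAt_hopfBarrier_time (t x : ℝ) :
    HasDerivAt (fun r => hopfBarrier A K b ε r x)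
      (ε * (A * K * Real.exp (A * (x + K * t - b)))) t := by
  have haffine : HasDerivAt (fun r => A * (x + K * r - b)) (A * K) t := by
    simpa using ((((hasDerivAt_id t).const_mul K).const_add x).sub_const b).const_mul A
  rw [mul_comm (A * K)]
  exact (haffine.exp.sub_const 1).const_mul ε

theorem hasDerivAt_exp_hopfBarrier (t x : ℝ) :
    HasDerivAt (fun y => Real.exp (A * (y + K * t - b)))
      (A * Real.exp (A * (x + K * t - b))) x := by
  have haffine : HasDerivAt (fun y => A * (y + K * t - b)) A x := by
    simpa using (((hasDerivAt_id x).add_const (K * t)).sub_const b).const_mul A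
  simpa only [mul_comm A] using haffine.exp

theorem hasDerivAt_hopfBarrier (t x : ℝ) :
    HasDerivAt (hopfBarrier A K b ε t) (ε * (A * Real.exp (A * (x + K * t - b)))) x :=
  ((hasDerivAt_exp_hopfBarrier t x).sub_const 1).const_mul ε

theorem continuous_hopfBarrier : Continuous fun q : ℝ × ℝ => hopfBarrier A K b ε q.1 q.2 := by
  unfold hopfBarrier
  fun_prop

end HopfBarrier

namespace IsParabolic

variable {w : ℝ → ℝ → ℝ}

theorem not_hopfBarrier_touches (h : IsParabolic w) {A K C b ε s y : ℝ} (hA : 0 ≤ A) (hC : 0 ≤ C)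
    (hAK : A * K + C * (1 + A) < A * A) (hε : 0 < ε)
    (hbound : |deriv (fun r => w r y) s - deriv (deriv (w s)) y| ≤ C * (|w s y| + |deriv (w s) y|))
    (hnonneg : 0 ≤ w s y) (hlt : w s y < hopfBarrier A K b ε s y)
    (hspace : IsLocalMin (fun x => w s x - hopfBarrier A K b ε s x) y) :
    ¬ ∀ᶠ r in 𝓝[<] s, w s y - hopfBarrier A K b ε s y ≤ w r y - hopfBarrier A K b ε r y := by
  intro htime
  set E := Real.exp (A * (y + K * s - b)) with hE
  have hεE : 0 < ε * E := mul_pos hε (Real.exp_pos _)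
  obtain ⟨hx, ht, hxx⟩ := h.deriv_le_of_isLocalMin_sub (hasDerivAt_hopfBarrier_time s y)
    (hasDerivAt_hopfBarrier s) (((hasDerivAt_exp_hopfBarrier s y).const_mul A).const_mul ε)
    hspace htime
  rw [← hE] at hx ht hxx
  have hw : w s y ≤ ε * E := by rw [hopfBarrier, ← hE] at hlt; linarith
  have hx_nonneg : 0 ≤ deriv (w s) y := by rw [hx, mul_left_comm]; positivity
  rw [abs_of_nonneg hnonneg, abs_of_nonneg hx_nonneg, hx] at hbound
  have hsub : ε * E * (A * A) ≤ ε * E * (A * K + C * (1 + A)) := calc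
    ε * E * (A * A) ≤ ε * (A * K * E) + C * (w s y + ε * (A * E)) := by
      linarith [neg_le_of_abs_le hbound]
    _ ≤ ε * (A * K * E) + C * (ε * E + ε * (A * E)) := by gcongr
    _ = ε * E * (A * K + C * (1 + A)) := by ring
  exact hAK.not_ge (le_of_mul_le_mul_left hsub hεE)

/-- The region lies between the line `x + K t = b`, on which the barrier vanishes, and `x = β`;
the two meet no earlier than at time `t₁`, so the region has no base. -/
theorem hopfBarrier_le (h : IsParabolic w) {A K C b β t₁ t₀ ε : ℝ} (hA : 0 ≤ A) (hK : 0 ≤ K)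
    (hC : 0 ≤ C) (hAK : A * K + C * (1 + A) < A * A) (hε : 0 < ε) (hcorner : β + K * t₁ ≤ b)
    (hbound : ∀ t x, t ∈ Icc t₁ t₀ → x ∈ Icc (b - K * t₀) β →
      |deriv (fun s => w s x) t - deriv (deriv (w t)) x| ≤ C * (|w t x| + |deriv (w t) x|))
    (hnonneg : ∀ t ∈ Icc t₁ t₀, ∀ x ≤ β, b ≤ x + K * t → 0 ≤ w t x)
    (hβ : ∀ t ∈ Icc t₁ t₀, hopfBarrier A K b ε t β ≤ w t β) {t x : ℝ} (ht : t ∈ Icc t₁ t₀)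
    (hx : x ≤ β) (hb : b ≤ x + K * t) : hopfBarrier A K b ε t x ≤ w t x := by
  by_contra! hneg
  set D : Set (ℝ × ℝ) := (Icc t₁ t₀ ×ˢ Icc (b - K * t₀) β) ∩ {q | b ≤ q.2 + K * q.1}
  have hmemD : ∀ {t x}, t ∈ Icc t₁ t₀ → x ≤ β → b ≤ x + K * t → (t, x) ∈ D := by
    intro t x ht hx hb
    have : K * t ≤ K * t₀ := mul_le_mul_of_nonneg_left ht.2 hK
    exact ⟨⟨ht, by linarith, hx⟩, hb⟩
  have hcompact : IsCompact D := (isCompact_Icc.prod isCompact_Icc).inter_right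
    (isClosed_le continuous_const (by fun_prop))
  obtain ⟨⟨s, y⟩, hsy, hmin⟩ := hcompact.exists_isMinOn ⟨_, hmemD ht hx hb⟩
    (h.continuous.sub (continuous_hopfBarrier (A := A) (K := K) (b := b) (ε := ε))).continuousOn
  obtain ⟨⟨hs, hy⟩, hby⟩ := id hsy
  have hmin' : ∀ {r z}, (r, z) ∈ D →
      w s y - hopfBarrier A K b ε s y ≤ w r z - hopfBarrier A K b ε r z := fun hr => hmin hr
  have hlt : w s y < hopfBarrier A K b ε s y := by linarith [hmin' (hmemD ht hx hb)]
  have hby' : b < y + K * s := hby.lt_of_ne fun heq => by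
    have hzero : hopfBarrier A K b ε s y = 0 := by simp [hopfBarrier, ← heq]
    exact (hnonneg s hs y hy.2 hby).not_gt (hzero ▸ hlt)
  have hyβ : y < β := hy.2.lt_of_ne fun heq => (hβ s hs).not_gt (heq ▸ hlt)
  have hs₁ : t₁ < s := hs.1.lt_of_ne fun heq => by
    subst heq
    linarith
  refine h.not_hopfBarrier_touches hA hC hAK hε (hbound s y hs hy) (hnonneg s hs y hy.2 hby) hlt
    ?_ ?_
  · have hline : ∀ᶠ x in 𝓝 y, b < x + K * s :=
      (by fun_prop : Continuous fun x => x + K * s).continuousAt.eventually (lt_mem_nhds hby')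
    filter_upwards [hline, gt_mem_nhds hyβ] with x hbx hxβ
    exact hmin' (hmemD hs hxβ.le hbx.le)
  · have hline : ∀ᶠ r in 𝓝 s, b < y + K * r :=
      (by fun_prop : Continuous fun r => y + K * r).continuousAt.eventually (lt_mem_nhds hby')
    filter_upwards [nhdsWithin_le_nhds hline, nhdsWithin_le_nhds (lt_mem_nhds hs₁),
      self_mem_nhdsWithin] with r hbr hr₁ hrs
    exact hmin' (hmemD ⟨hr₁.le, (le_of_lt hrs).trans hs.2⟩ hy.2 hbr.le)

theorem hopf (h : IsParabolic w) {K b β t₁ t₀ : ℝ} (hK : 0 ≤ K) (ht : t₁ ≤ t₀)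
    (hcorner : β + K * t₁ ≤ b) (hnonneg : ∀ t ∈ Icc t₁ t₀, ∀ x ≤ β, b ≤ x + K * t → 0 ≤ w t x)
    (hβ : ∀ t ∈ Icc t₁ t₀, 0 < w t β) :
    ∃ κ > 0, ∀ x ≤ β, b ≤ x + K * t₀ → κ * (x + K * t₀ - b) ≤ w t₀ x := by
  obtain ⟨C, hC, hbound⟩ := h.exists_bound (Icc t₁ t₀ ×ˢ Icc (b - K * t₀) β)
    (isCompact_Icc.prod isCompact_Icc)
  obtain ⟨m, hm, hmin⟩ := isCompact_Icc.exists_isMinOn (nonempty_Icc.2 ht)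
    (h.continuous_time β).continuousOn
  set A := K + 2 * C + 1
  have hA₀ : 0 < A := by positivity
  set ε := w m β / Real.exp (A * (β + K * t₀ - b))
  have hε₀ : 0 < ε := div_pos (hβ m hm) (Real.exp_pos _)
  refine ⟨ε * A, mul_pos hε₀ hA₀, fun x hx hb => ?_⟩
  calc ε * A * (x + K * t₀ - b) ≤ hopfBarrier A K b ε t₀ x := by
        rw [hopfBarrier, mul_assoc]
        gcongr
        linarith [Real.add_one_le_exp (A * (x + K * t₀ - b))]
    _ ≤ w t₀ x := h.hopfBarrier_le hA₀.le hK hC (by nlinarith) hε₀ hcorner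
        (fun t x ht hx => hbound t x ⟨ht, hx⟩) hnonneg (fun t ht => ?_) (right_mem_Icc.2 ht) hx hb
  calc hopfBarrier A K b ε t β ≤ ε * Real.exp (A * (β + K * t - b)) := by
        rw [hopfBarrier]
        gcongr
        exact sub_le_self _ zero_le_one
    _ ≤ ε * Real.exp (A * (β + K * t₀ - b)) := by
        gcongr
        exact ht.2
    _ = w m β := div_mul_cancel₀ _ (Real.exp_pos _).ne'
    _ ≤ w t β := hmin ht

theorem pos_of_nonneg_of_pos_right (h : IsParabolic w) {t₁ t₀ α β : ℝ} (ht : t₁ < t₀)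
    (hnonneg : ∀ t ∈ Icc t₁ t₀, ∀ x ∈ Icc α β, 0 ≤ w t x) (hβ : ∀ t ∈ Icc t₁ t₀, 0 < w t β) :
    ∀ x ∈ Ioc α β, 0 < w t₀ x := by
  intro x hx
  set K := (β - α) / (t₀ - t₁)
  have hK : 0 ≤ K := div_nonneg (by linarith [hx.1, hx.2]) (sub_pos.2 ht).le
  have hKt : K * (t₀ - t₁) = β - α := div_mul_cancel₀ _ (sub_pos.2 ht).ne'
  have hKmono : ∀ t ∈ Icc t₁ t₀, K * t ≤ K * t₀ := fun t ht =>
    mul_le_mul_of_nonneg_left ht.2 hK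
  obtain ⟨κ, hκ, hle⟩ := h.hopf hK ht.le (b := α + K * t₀) (β := β) (by linarith)
    (fun t ht x hxβ hb => hnonneg t ht x ⟨by linarith [hKmono t ht], hxβ⟩) hβ
  exact (mul_pos hκ (by linarith [hx.1])).trans_le (hle x hx.2 (by linarith [hx.1]))

end IsParabolic

/-- All zeros of `φ` in `s` are simple. -/
def HasSimpleZerosOn (φ : ℝ → ℝ) (s : Set ℝ) : Prop :=
  ∀ x ∈ s, φ x = 0 → deriv φ x ≠ 0

/-- The signs of `φ` at `α` and `β` are opposite, and between `α` and `β` the function changes from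
the first to the second without going back. Zeros of `φ` in between are not excluded. -/
def ChangesSignOnce (φ : ℝ → ℝ) (α β : ℝ) : Prop :=
  φ α * φ β < 0 ∧ ∀ p q, α < p → p < q → q < β → ¬ (φ α * φ p < 0 ∧ φ p * φ q < 0)

section SignChange

variable {φ : ℝ → ℝ} {α β : ℝ}

theorem HasSimpleZerosOn.of_neg {s : Set ℝ} (h : HasSimpleZerosOn (fun x => -φ x) s) :
    HasSimpleZerosOn φ s := by
  simpa only [HasSimpleZerosOn, deriv.fun_neg', neg_eq_zero, neg_ne_zero] using h

theorem ChangesSignOnce.neg (h : ChangesSignOnce φ α β) : ChangesSignOnce (fun x => -φ x) α β := by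
  simpa only [ChangesSignOnce, neg_mul_neg] using h

theorem ChangesSignOnce.nonpos_left (h : ChangesSignOnce φ α β) (hα : φ α < 0) {p : ℝ}
    (hpβ : p < β) (hp : φ p < 0) : ∀ x ∈ Icc α p, φ x ≤ 0 := by
  intro x hx
  by_contra! hpos
  have hαx : α < x := hx.1.lt_of_ne fun heq => hpos.not_gt (heq ▸ hα)
  have hxp : x < p := hx.2.lt_of_ne fun heq => hpos.not_gt (heq ▸ hp)
  exact h.2 x p hαx hxp hpβ ⟨mul_neg_of_neg_of_pos hα hpos, mul_neg_of_pos_of_neg hpos hp⟩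

theorem ChangesSignOnce.nonneg_right (h : ChangesSignOnce φ α β) (hα : φ α < 0) {q : ℝ}
    (hαq : α < q) (hq : 0 < φ q) : ∀ x ∈ Icc q β, 0 ≤ φ x := by
  intro x hx
  by_contra! hneg
  have hqx : q < x := hx.1.lt_of_ne fun heq => hneg.not_gt (heq ▸ hq)
  have hxβ : x < β := hx.2.lt_of_ne fun heq => hneg.not_gt (heq ▸ pos_of_mul_neg_right h.1 hα.le)
  exact h.2 q x hαq hqx hxβ ⟨mul_neg_of_neg_of_pos hα hq, mul_neg_of_pos_of_neg hq hneg⟩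

theorem exists_Icc_subset_Ioo_deriv_pos (hφ : Differentiable ℝ φ) {x : ℝ}
    (hφ' : ContinuousAt (deriv φ) x) (hx : x ∈ Ioo α β) (hzero : φ x = 0) (hpos : 0 < deriv φ x) :
    ∃ p ∈ Ioo α x, ∃ q ∈ Ioo x β, φ p < 0 ∧ 0 < φ q ∧ ∀ y ∈ Icc p q, 0 < deriv φ y := by
  obtain ⟨l, u, ⟨hlx, hxu⟩, hlu⟩ := mem_nhds_iff_exists_Ioo_subset.1
    ((hφ'.eventually (lt_mem_nhds hpos)).and (Ioo_mem_nhds hx.1 hx.2))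
  obtain ⟨p, hlp, hpx⟩ := exists_between hlx
  obtain ⟨q, hxq, hqu⟩ := exists_between hxu
  have hmem : ∀ y ∈ Icc p q, 0 < deriv φ y ∧ y ∈ Ioo α β := fun y hy =>
    hlu ⟨hlp.trans_le hy.1, hy.2.trans_lt hqu⟩
  have hpq : p ≤ q := (hpx.trans hxq).le
  have hmono : StrictMonoOn φ (Icc p q) := strictMonoOn_of_deriv_pos (convex_Icc p q)
    hφ.continuous.continuousOn fun y hy => (hmem y (interior_subset hy)).1
  have hxmem : x ∈ Icc p q := ⟨hpx.le, hxq.le⟩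
  refine ⟨p, ⟨(hmem p (left_mem_Icc.2 hpq)).2.1, hpx⟩, q, ⟨hxq, (hmem q (right_mem_Icc.2 hpq)).2.2⟩,
    ?_, ?_, fun y hy => (hmem y hy).1⟩
  · simpa only [hzero] using hmono (left_mem_Icc.2 hpq) hxmem hpx
  · simpa only [hzero] using hmono hxmem (right_mem_Icc.2 hpq) hxq

end SignChange

theorem deriv_pos_of_forall_mul_sub_le {φ : ℝ → ℝ} {x β κ : ℝ} (hφ : DifferentiableAt ℝ φ x)
    (hx : φ x = 0) (hxβ : x < β) (hκ : 0 < κ) (hle : ∀ y ∈ Ioo x β, κ * (y - x) ≤ φ y) :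
    0 < deriv φ x := by
  refine hκ.trans_le ?_
  have hslope := (hasDerivWithinAt_iff_tendsto_slope' self_notMem_Ioi).1
    (hφ.hasDerivAt.hasDerivWithinAt (s := Ioi x))
  refine ge_of_tendsto hslope ?_
  filter_upwards [Ioo_mem_nhdsGT hxβ] with y hy
  rw [slope_def_field, hx, sub_zero, le_div_iff₀ (sub_pos.2 hy.1)]
  exact hle y hy

namespace IsParabolic

variable {w : ℝ → ℝ → ℝ} {s₁ s₂ α β : ℝ}

/-- A line `x + K t = b` of the largest possible `b` meeting `{w ≤ 0}` does so at such a point; for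
steep lines it cannot be on the parabolic boundary. -/
theorem exists_line_nonpos_forall_nonneg (h : IsParabolic w) (hs : s₁ < s₂) (hαβ : α < β)
    (hα : ∀ t ∈ Icc s₁ s₂, w t α < 0) (hβ : ∀ t ∈ Icc s₁ s₂, 0 < w t β) :
    ∃ K ≥ 0, ∃ t₀ ∈ Ioc s₁ s₂, ∃ x₀ ∈ Ico α β, w t₀ x₀ ≤ 0 ∧ β + K * s₁ ≤ x₀ + K * t₀ ∧
      ∀ t ∈ Icc s₁ t₀, ∀ x ≤ β, x₀ + K * t₀ ≤ x + K * t → 0 ≤ w t x := by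
  set K := (β - α + 1) / (s₂ - s₁)
  have hK : 0 < K := div_pos (by linarith) (sub_pos.2 hs)
  have hKs : K * (s₂ - s₁) = β - α + 1 := div_mul_cancel₀ _ (sub_pos.2 hs).ne'
  have hcompact : IsCompact ((Icc s₁ s₂ ×ˢ Icc α β) ∩ {q | w q.1 q.2 ≤ 0}) :=
    (isCompact_Icc.prod isCompact_Icc).inter_right (isClosed_le h.continuous continuous_const)
  have hcorner : (s₂, α) ∈ (Icc s₁ s₂ ×ˢ Icc α β) ∩ {q | w q.1 q.2 ≤ 0} :=
    ⟨⟨right_mem_Icc.2 hs.le, left_mem_Icc.2 hαβ.le⟩, (hα s₂ (right_mem_Icc.2 hs.le)).le⟩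
  obtain ⟨⟨t₀, x₀⟩, ⟨⟨ht₀, hx₀⟩, hw₀⟩, hmax⟩ := hcompact.exists_isMaxOn
    (f := fun q : ℝ × ℝ => q.2 + K * q.1) ⟨_, hcorner⟩ (by fun_prop)
  have hle : α + K * s₂ ≤ x₀ + K * t₀ := hmax hcorner
  have hx₀β : x₀ < β := hx₀.2.lt_of_ne fun heq => (hβ t₀ ht₀).not_ge (heq ▸ hw₀)
  have ht₀s₁ : s₁ < t₀ := by
    by_contra! hts
    have : K * t₀ ≤ K * s₁ := mul_le_mul_of_nonneg_left hts hK.le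
    linarith
  refine ⟨K, hK.le, t₀, ⟨ht₀s₁, ht₀.2⟩, x₀, ⟨hx₀.1, hx₀β⟩, hw₀, by linarith, ?_⟩
  intro t ht x hx hline
  by_contra! hneg
  have htI : t ∈ Icc s₁ s₂ := ⟨ht.1, ht.2.trans ht₀.2⟩
  have hKt : K * t ≤ K * t₀ := mul_le_mul_of_nonneg_left ht.2 hK.le
  have hxβ : x < β := hx.lt_of_ne fun heq => (hβ t htI).not_gt (heq ▸ hneg)
  have hright : ∀ᶠ y in 𝓝[>] x, w t y < 0 := nhdsWithin_le_nhds
    ((h.differentiable t).continuous.continuousAt.eventually (gt_mem_nhds hneg))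
  obtain ⟨y, hy, hxy⟩ := (hright.and (Ioo_mem_nhdsGT hxβ)).exists
  have hymax : y + K * t ≤ x₀ + K * t₀ :=
    hmax (show (t, y) ∈ _ from ⟨⟨htI, by linarith [hxy.1, hx₀.1], hxy.2.le⟩, hy.le⟩)
  linarith [hxy.1]

theorem exists_eq_zero_deriv_pos (h : IsParabolic w) (hs : s₁ < s₂) (hαβ : α < β)
    (hα : ∀ t ∈ Icc s₁ s₂, w t α < 0) (hβ : ∀ t ∈ Icc s₁ s₂, 0 < w t β) :
    ∃ t ∈ Ioc s₁ s₂, ∃ x ∈ Ioo α β, w t x = 0 ∧ 0 < deriv (w t) x := by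
  obtain ⟨K, hK, t, ht, x, hx, hwx, hcorner, hnonneg⟩ :=
    h.exists_line_nonpos_forall_nonneg hs hαβ hα hβ
  have hzero : w t x = 0 := hwx.antisymm (hnonneg t (right_mem_Icc.2 ht.1.le) x hx.2.le le_rfl)
  have hαx : α < x := hx.1.lt_of_ne fun heq =>
    (hα t (Ioc_subset_Icc_self ht)).ne (heq ▸ hzero)
  obtain ⟨κ, hκ, hle⟩ := h.hopf hK ht.1.le hcorner hnonneg fun r hr => hβ r ⟨hr.1, hr.2.trans ht.2⟩
  refine ⟨t, ht, x, ⟨hαx, hx.2⟩, hzero,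
    deriv_pos_of_forall_mul_sub_le (h.differentiable t x) hzero hx.2 hκ fun y hy => ?_⟩
  simpa only [add_sub_add_right_eq_sub] using hle y hy.2.le (by linarith [hy.1])

theorem exists_hasSimpleZerosOn_of_neg_of_pos (h : IsParabolic w) (hs : s₁ < s₂) (hαβ : α < β)
    (hα : ∀ t ∈ Icc s₁ s₂, w t α < 0) (hβ : ∀ t ∈ Icc s₁ s₂, 0 < w t β)
    (honce : ∀ t ∈ Icc s₁ s₂, ChangesSignOnce (w t) α β) :
    ∃ t ∈ Ioc s₁ s₂, HasSimpleZerosOn (w t) (Icc α β) := by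
  obtain ⟨t, ht, x, hx, hzero, hpos⟩ := h.exists_eq_zero_deriv_pos hs hαβ hα hβ
  obtain ⟨p, hp, q, hq, hwp, hwq, hderiv⟩ := exists_Icc_subset_Ioo_deriv_pos (h.differentiable t)
    (h.continuous_deriv.comp (Continuous.prodMk_right t)).continuousAt hx hzero hpos
  obtain ⟨s, hst, hpast⟩ := mem_nhdsLE_iff_exists_Icc_subset.1 (nhdsWithin_le_nhds
    (((h.continuous_time p).continuousAt.eventually (gt_mem_nhds hwp)).and
      (((h.continuous_time q).continuousAt.eventually (lt_mem_nhds hwq)).and (lt_mem_nhds ht.1))))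
  have hsub : ∀ r ∈ Icc s t, r ∈ Icc s₁ s₂ := fun r hr =>
    ⟨(hpast hr).2.2.le, hr.2.trans ht.2⟩
  have hleft : ∀ y ∈ Ioc α p, 0 < -w t y := h.neg.pos_of_nonneg_of_pos_right hst
    (fun r hr y hy => neg_nonneg.2 ((honce r (hsub r hr)).nonpos_left (hα r (hsub r hr))
      (hp.2.trans hx.2) (hpast hr).1 y hy))
    (fun r hr => neg_pos.2 (hpast hr).1)
  have hright : ∀ y ∈ Ioc q β, 0 < w t y := h.pos_of_nonneg_of_pos_right hst
    (fun r hr => (honce r (hsub r hr)).nonneg_right (hα r (hsub r hr)) (hx.1.trans hq.1)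
      (hpast hr).2.1)
    (fun r hr => hβ r (hsub r hr))
  refine ⟨t, ht, fun y hy hy₀ => (hderiv y ⟨?_, ?_⟩).ne'⟩
  · by_contra! hyp
    have hαy : α < y := hy.1.lt_of_ne fun heq => (hα t (Ioc_subset_Icc_self ht)).ne (heq ▸ hy₀)
    linarith [hleft y ⟨hαy, hyp.le⟩]
  · by_contra! hqy
    exact (hright y ⟨hqy, hy.2⟩).ne' hy₀

theorem exists_hasSimpleZerosOn (h : IsParabolic w) (hs : s₁ < s₂) (hαβ : α < β)
    (honce : ∀ t ∈ Icc s₁ s₂, ChangesSignOnce (w t) α β) :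
    ∃ t ∈ Ioc s₁ s₂, HasSimpleZerosOn (w t) (Icc α β) := by
  wlog hα : w s₁ α < 0 generalizing w
  · have hne : w s₁ α ≠ 0 := left_ne_zero_of_mul (honce s₁ (left_mem_Icc.2 hs.le)).1.ne
    obtain ⟨t, ht, hsimple⟩ := this h.neg (fun t ht => (honce t ht).neg)
      (neg_neg_iff_pos.2 ((not_lt.1 hα).lt_of_ne' hne))
    exact ⟨t, ht, hsimple.of_neg⟩
  have hα' : ∀ t ∈ Icc s₁ s₂, w t α < 0 := by
    intro t ht
    by_contra! hnonneg
    obtain ⟨r, hr, hzero⟩ := intermediate_value_Icc ht.1 (h.continuous_time α).continuousOn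
      ⟨hα.le, hnonneg⟩
    exact left_ne_zero_of_mul (honce r ⟨hr.1, hr.2.trans ht.2⟩).1.ne hzero
  exact h.exists_hasSimpleZerosOn_of_neg_of_pos hs hαβ hα'
    (fun t ht => pos_of_mul_neg_right (honce t ht).1 (hα' t ht).le) honce

end IsParabolic

section PeriodicZeros

variable {φ : ℝ → ℝ} {k : ℕ}

theorem periodic_deriv (hφ : Periodic φ 1) : Periodic (deriv φ) 1 := fun x => by
  rw [← deriv_comp_add_const, show (fun y => φ (y + 1)) = φ from funext hφ]

theorem HasSimpleZerosOn.univ_of_periodic (hφ : Periodic φ 1) {a : ℝ}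
    (h : HasSimpleZerosOn φ (Icc a (a + 1))) : HasSimpleZerosOn φ univ := by
  intro x _ hx
  have hjet : Periodic (fun y => (φ y, deriv φ y)) 1 := fun y =>
    Prod.ext (hφ y) (periodic_deriv hφ y)
  obtain ⟨y, hy, hxy⟩ := hjet.exists_mem_Ico one_pos x a
  rw [Prod.mk.injEq] at hxy
  exact hxy.2 ▸ h y (Ico_subset_Icc_self hy) (hxy.1 ▸ hx)

theorem IsSignCycle.eventually_of_tendsto {ι : Type*} {l : Filter ι} {ψ : ι → ℝ → ℝ} {X : ℤ → ℝ}
    (hX : IsSignCycle φ k X) (hψ : ∀ n, Periodic (ψ n) 1)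
    (hlim : ∀ x, Tendsto (fun n => ψ n x) l (𝓝 (φ x))) : ∀ᶠ n in l, IsSignCycle (ψ n) k X := by
  have hk : (0 : ℤ) < k := by exact_mod_cast hX.pos
  have hfin : ∀ᶠ n in l, ∀ i ∈ Finset.Ico (0 : ℤ) k, ψ n (X i) * ψ n (X (i + 1)) < 0 :=
    (Finset.eventually_all _).2 fun i _ =>
      ((hlim _).mul (hlim _)).eventually (gt_mem_nhds (hX.mul_neg i))
  filter_upwards [hfin] with n hn
  refine ⟨hX.strictMono, hX.add_period, fun i => ?_⟩
  have hper : ∀ j m : ℤ, ψ n (X (j + m * k)) = ψ n (X j) := fun j m => by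
    rw [hX.add_int_mul]
    simpa using (hψ n).int_mul m (X j)
  have hi := hn (i % k) (Finset.mem_Ico.2 ⟨Int.emod_nonneg i hk.ne', Int.emod_lt_of_pos i hk⟩)
  rwa [← hper (i % k) (i / k), ← hper (i % k + 1) (i / k), add_right_comm, Int.emod_add_ediv_mul]
    at hi

/-- Otherwise two more sign changes could be inserted into the cycle. -/
theorem IsSignCycle.changesSignOnce_zero {X : ℤ → ℝ} (hφ : Periodic φ 1) (hX : IsSignCycle φ k X)
    (hmax : zeroNumber φ ≤ k) : ChangesSignOnce φ (X 0) (X 1) := by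
  refine ⟨by simpa using hX.mul_neg 0, fun p q hp hpq hq ⟨hneg_p, hneg_q⟩ => ?_⟩
  have hpos : 0 < φ (X 0) * φ q := by
    have : φ p * φ p * (φ (X 0) * φ q) > 0 := by linarith [mul_pos_of_neg_of_neg hneg_p hneg_q]
    exact pos_of_mul_pos_right this (mul_self_nonneg _)
  have hneg_last : φ q * φ (X 1) < 0 := by
    have h₀₁ : φ (X 0) * φ (X 1) < 0 := by simpa using hX.mul_neg 0
    have : φ (X 0) * φ (X 0) * (φ q * φ (X 1)) < 0 := by linarith [mul_neg_of_neg_of_pos h₀₁ hpos]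
    exact neg_of_mul_neg_right this (mul_self_nonneg _)
  obtain ⟨Y, hY⟩ := IsSignCycle.exists_of_chain (k := k + 2) hφ
    (Y := fun | 0 => X 0 | 1 => p | 2 => q | n + 3 => X (n + 1)) (by omega)
    (fun n hn => by
      match n with
      | 0 => exact hp
      | 1 => exact hpq
      | 2 => exact hq
      | n + 3 => exact hX.strictMono (by simp))
    (by
      obtain ⟨m, rfl⟩ := Nat.exists_eq_succ_of_ne_zero hX.pos.ne'
      simpa using hX.add_period 0)
    (fun n hn => by
      match n with
      | 0 => exact hneg_p
      | 1 => exact hneg_q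
      | 2 => exact hneg_last
      | n + 3 => simpa using hX.mul_neg (n + 1))
  have hle : ((k + 2 : ℕ) : ℕ∞) ≤ k := (hY.le_zeroNumber hφ).trans hmax
  have : k + 2 ≤ k := by exact_mod_cast hle
  omega

theorem IsSignCycle.changesSignOnce {X : ℤ → ℝ} (hφ : Periodic φ 1) (hX : IsSignCycle φ k X)
    (hmax : zeroNumber φ ≤ k) (i : ℤ) : ChangesSignOnce φ (X i) (X (i + 1)) := by
  simpa [add_comm] using (hX.shift i).changesSignOnce_zero hφ hmax

end PeriodicZeros

namespace IsParabolic

variable {w : ℝ → ℝ → ℝ} {s₁ s₂ : ℝ}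

theorem isOpen_setOf_hasSimpleZerosOn (h : IsParabolic w) {s : Set ℝ} (hs : IsCompact s) :
    IsOpen {t | HasSimpleZerosOn (w t) s} := by
  refine isOpen_iff_eventually.2 fun t ht => hs.eventually_forall_of_forall_eventually
    (P := fun t x => w t x = 0 → deriv (w t) x ≠ 0) fun x hx => ?_
  by_cases hzero : w t x = 0
  · filter_upwards [h.continuous_deriv.continuousAt.eventually_ne (ht x hx hzero)] with z hz _
      using hz
  · filter_upwards [h.continuous.continuousAt.eventually_ne hzero] with z hz hz₀
      using absurd hz₀ hz

theorem exists_hasSimpleZerosOn_Icc_of_isSignCycle (h : IsParabolic w) (hs : s₁ < s₂) {k : ℕ}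
    {X : ℤ → ℝ} (hX : ∀ t ∈ Icc s₁ s₂, IsSignCycle (w t) k X)
    (honce : ∀ t ∈ Icc s₁ s₂, ∀ i, ChangesSignOnce (w t) (X i) (X (i + 1))) (n : ℕ) :
    ∃ t ∈ Ioc s₁ s₂, HasSimpleZerosOn (w t) (Icc (X 0) (X n)) := by
  induction n with
  | zero =>
    have hs₂ := right_mem_Icc.2 hs.le
    refine ⟨s₂, right_mem_Ioc.2 hs, fun x hx hx₀ => ?_⟩
    rw [Nat.cast_zero, Icc_self, mem_singleton_iff] at hx
    exact absurd (hx ▸ hx₀) ((hX s₂ hs₂).ne_zero 0)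
  | succ n ih =>
    obtain ⟨t, ht, hsimple⟩ := ih
    obtain ⟨r, hrt, hr⟩ := mem_nhdsLE_iff_exists_Icc_subset.1 (nhdsWithin_le_nhds (inter_mem
      ((h.isOpen_setOf_hasSimpleZerosOn isCompact_Icc).mem_nhds hsimple) (lt_mem_nhds ht.1)))
    have hsub : ∀ t' ∈ Icc r t, t' ∈ Icc s₁ s₂ := fun t' ht' =>
      ⟨(hr ht').2.le, ht'.2.trans ht.2⟩
    obtain ⟨t', ht', hlast⟩ := h.exists_hasSimpleZerosOn hrt
      ((hX t (Ioc_subset_Icc_self ht)).strictMono (lt_add_one (n : ℤ)))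
      (fun t' ht' => honce t' (hsub t' ht') n)
    have ht'_mem := Ioc_subset_Icc_self ht'
    refine ⟨t', ⟨(hr ht'_mem).2, (hsub t' ht'_mem).2⟩, fun x hx => ?_⟩
    obtain hxn | hxn := le_total x (X n)
    · exact (hr ht'_mem).1 x ⟨hx.1, hxn⟩
    · exact hlast x ⟨hxn, by simpa using hx.2⟩

theorem exists_hasSimpleZerosOn_univ_of_zeroNumber_eq_zero (h : IsParabolic w)
    (hper : ∀ t, Periodic (w t) 1) (hs : s₁ < s₂) (hzero : zeroNumber (w s₁) = 0)
    (hne : w s₁ ≠ 0) : ∃ t ∈ Ioo s₁ s₂, HasSimpleZerosOn (w t) univ := by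
  obtain ⟨x₀, hx₀⟩ := Function.ne_iff.1 hne
  wlog hpos : 0 < w s₁ x₀ generalizing w
  · obtain ⟨t, ht, hsimple⟩ := this h.neg (fun t x => congrArg Neg.neg (hper t x))
      (by rw [zeroNumber_neg, hzero]) (by simpa [Function.ne_iff] using ⟨x₀, hx₀⟩)
      (neg_ne_zero.2 hx₀) (neg_pos.2 ((not_lt.1 hpos).lt_of_ne hx₀))
    exact ⟨t, ht, hsimple.of_neg⟩
  obtain ⟨t, hst, hsub⟩ := mem_nhdsGE_iff_exists_Icc_subset.1 (nhdsWithin_le_nhds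
    (((h.continuous_time x₀).continuousAt.eventually (lt_mem_nhds hpos)).and (gt_mem_nhds hs)))
  have hnonneg : ∀ r ∈ Icc s₁ t, ∀ x, 0 ≤ w r x := by
    intro r hr x
    have hzero_r : zeroNumber (w r) = 0 :=
      le_antisymm (hzero ▸ h.zeroNumber_antitone hper hr.1) zero_le
    exact nonneg_of_mul_nonneg_left (mul_nonneg_of_zeroNumber_eq_zero (hper r) hzero_r x x₀)
      (hsub hr).1
  have hpos_t : ∀ x ∈ Ioc x₀ (x₀ + 1), 0 < w t x :=
    h.pos_of_nonneg_of_pos_right hst (fun r hr x _ => hnonneg r hr x)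
      fun r hr => (hper r x₀).symm ▸ (hsub hr).1
  refine ⟨t, ⟨hst, (hsub (right_mem_Icc.2 (le_of_lt hst))).2⟩, fun x _ hx => ?_⟩
  obtain ⟨y, hy, hxy⟩ := (hper t).exists_mem_Ioc one_pos x x₀
  exact absurd (hxy ▸ hx) (hpos_t y hy).ne'

theorem exists_hasSimpleZerosOn_univ (h : IsParabolic w) (hper : ∀ t, Periodic (w t) 1)
    (hs : s₁ < s₂) (hne : w s₁ ≠ 0) (htop : zeroNumber (w s₁) ≠ ⊤) :
    ∃ t ∈ Ioo s₁ s₂, HasSimpleZerosOn (w t) univ := by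
  by_cases hzero : zeroNumber (w s₁) = 0
  · exact h.exists_hasSimpleZerosOn_univ_of_zeroNumber_eq_zero hper hs hzero hne
  obtain ⟨N, X, hX, hN⟩ := exists_isSignCycle_eq_zeroNumber (hper s₁) hzero htop
  obtain ⟨s, hs₁s, hsub⟩ := mem_nhdsGE_iff_exists_Icc_subset.1 (nhdsWithin_le_nhds
    ((hX.eventually_of_tendsto hper fun x => (h.continuous_time x).tendsto s₁).and
      (gt_mem_nhds hs)))
  obtain ⟨t, ht, hsimple⟩ := h.exists_hasSimpleZerosOn_Icc_of_isSignCycle hs₁s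
    (fun t ht => (hsub ht).1) (fun t ht => (hsub ht).1.changesSignOnce (hper t)
      (hN ▸ h.zeroNumber_antitone hper ht.1)) N
  have hcircle : X N = X 0 + 1 := by simpa using hX.add_period 0
  exact ⟨t, ⟨ht.1, (hsub (Ioc_subset_Icc_self ht)).2⟩,
    (hcircle ▸ hsimple).univ_of_periodic (hper t)⟩

end IsParabolic

section SimpleZerosStability

variable {g v : ℝ → ℝ} {k : ℕ}

theorem HasSimpleZerosOn.exists_pos_le_abs_or_le_abs_deriv (hsimple : HasSimpleZerosOn g univ)
    (hper : Periodic g 1) (hg : Continuous g) (hg' : Continuous (deriv g)) :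
    ∃ c > 0, ∀ x, c ≤ |g x| ∨ c ≤ |deriv g x| := by
  have hpos : ∀ x, 0 < max |g x| |deriv g x| := fun x => by
    by_cases hx : g x = 0
    · exact lt_max_of_lt_right (abs_pos.2 (hsimple x (mem_univ x) hx))
    · exact lt_max_of_lt_left (abs_pos.2 hx)
  have hmax_per : Periodic (fun x => max |g x| |deriv g x|) 1 := fun x => by
    simp only [hper x, periodic_deriv hper x]
  obtain ⟨y, -, hmin⟩ := isCompact_Icc.exists_isMinOn (nonempty_Icc.2 zero_le_one)
    (hg.abs.max hg'.abs).continuousOn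
  refine ⟨_, hpos y, fun x => le_max_iff.1 ?_⟩
  obtain ⟨z, hz, hxz⟩ := hmax_per.exists_mem_Ico₀ one_pos x
  exact (hmin (Ico_subset_Icc_self hz)).trans_eq hxz.symm

theorem exists_mem_Ioo_eq_zero_of_mul_neg (hv : Continuous v) {a b : ℝ} (hab : a < b)
    (hneg : v a * v b < 0) : ∃ z ∈ Ioo a b, v z = 0 := by
  have hmem : (0 : ℝ) ∈ uIcc (v a) (v b) := by
    rw [mem_uIcc]
    rcases mul_neg_iff.1 hneg with ⟨ha, hb⟩ | ⟨ha, hb⟩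
    exacts [Or.inr ⟨hb.le, ha.le⟩, Or.inl ⟨ha.le, hb.le⟩]
  obtain ⟨z, hz, hvz⟩ := intermediate_value_uIcc hv.continuousOn hmem
  rw [uIcc_of_le hab.le] at hz
  refine ⟨z, ⟨hz.1.lt_of_ne fun heq => ?_, hz.2.lt_of_ne fun heq => ?_⟩, hvz⟩
  · exact left_ne_zero_of_mul hneg.ne (heq ▸ hvz)
  · exact right_ne_zero_of_mul hneg.ne (heq ▸ hvz)

theorem exists_mem_Ioo_deriv_eq_zero_mul_pos (hv : Differentiable ℝ v) {a b x : ℝ}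
    (hx : x ∈ Ioo a b) (ha : v a = 0) (hb : v b = 0) (hvx : v x ≠ 0) :
    ∃ y ∈ Ioo a b, deriv v y = 0 ∧ 0 < v y * v x := by
  obtain ⟨y, hy, hmax⟩ := isCompact_Icc.exists_isMaxOn ⟨x, Ioo_subset_Icc_self hx⟩
    (hv.continuous.mul_const (v x)).continuousOn
  have hpos : 0 < v y * v x :=
    (mul_self_pos.2 hvx).trans_le (hmax (Ioo_subset_Icc_self hx))
  have hvy : v y ≠ 0 := left_ne_zero_of_mul hpos.ne'
  have hay : a < y := hy.1.lt_of_ne fun heq => hvy (heq ▸ ha)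
  have hyb : y < b := hy.2.lt_of_ne fun heq => hvy (heq ▸ hb)
  have hderiv := (hmax.isLocalMax (Icc_mem_nhds hay hyb)).deriv_eq_zero
  rw [deriv_mul_const (hv y)] at hderiv
  exact ⟨y, ⟨hay, hyb⟩, (mul_eq_zero.1 hderiv).resolve_right hvx, hpos⟩

theorem IsSignCycle.exists_deriv_eq_zero {X : ℤ → ℝ} (hX : IsSignCycle v k X)
    (hper : Periodic v 1) (hv : Differentiable ℝ v) :
    ∃ Y, IsSignCycle v k Y ∧ ∀ i, deriv v (Y i) = 0 := by
  have hint : ∀ x (n : ℤ), v (x + n) = v x := fun x n => by simpa using hper.int_mul n x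
  have hint' : ∀ x (n : ℤ), deriv v (x + n) = deriv v x := fun x n => by
    simpa using (periodic_deriv hper).int_mul n x
  have hX_add : ∀ i n : ℤ, X (i + n * k + 1) = X (i + 1) + n := fun i n => by
    rw [add_right_comm, hX.add_int_mul]
  obtain ⟨Z, hZ, hZ_add⟩ := exists_equivariant_choice (c := (1 : ℝ))
    (P := fun i z => z ∈ Ioo (X i) (X (i + 1)) ∧ v z = 0) hX.pos
    (fun i z hz n => by simpa [hX_add, hX.add_int_mul, hint] using hz)
    fun i => exists_mem_Ioo_eq_zero_of_mul_neg hv.continuous (hX.strictMono (lt_add_one i))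
      (hX.mul_neg i)
  have hZ_mul := add_int_mul_of_forall_add hZ_add
  have hZ_mul_add : ∀ i n : ℤ, Z (i + n * k + 1) = Z (i + 1) + n := fun i n => by
    rw [add_right_comm, hZ_mul]
  obtain ⟨Y, hY, hY_add⟩ := exists_equivariant_choice (c := (1 : ℝ))
    (P := fun i y => y ∈ Ioo (Z i) (Z (i + 1)) ∧ deriv v y = 0 ∧ 0 < v y * v (X (i + 1))) hX.pos
    (fun i y hy n => by simpa [hX_add, hZ_mul, hZ_mul_add, hint, hint'] using hy)
    fun i => exists_mem_Ioo_deriv_eq_zero_mul_pos hv ⟨(hZ i).1.2, (hZ (i + 1)).1.1⟩ (hZ i).2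
      (hZ (i + 1)).2 (hX.ne_zero (i + 1))
  refine ⟨Y, ⟨strictMono_int_of_lt_succ fun i => (hY i).1.2.trans (hY (i + 1)).1.1, hY_add,
    fun i => ?_⟩, fun i => (hY i).2.1⟩
  exact mul_neg_of_mul_pos (hX.mul_neg (i + 1)) (by simpa only [mul_comm] using (hY i).2.2)
    (by simpa only [mul_comm] using (hY (i + 1)).2.2)

theorem mul_pos_of_abs_sub_lt_of_le_abs {a b c : ℝ} (hab : |a - b| < c) (hb : c ≤ |b|) :
    0 < a * b := by
  rw [abs_lt] at hab
  rcases le_abs.1 hb with hb | hb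
  · exact mul_pos (by linarith) (by linarith)
  · exact mul_pos_of_neg_of_neg (by linarith) (by linarith)

theorem zeroNumber_le_of_forall_abs_sub_lt (hg : Periodic g 1) (hv : Periodic v 1)
    (hv' : Differentiable ℝ v) {c : ℝ} (hc : ∀ x, c ≤ |g x| ∨ c ≤ |deriv g x|)
    (hclose : ∀ x, |v x - g x| < c ∧ |deriv v x - deriv g x| < c) :
    zeroNumber v ≤ zeroNumber g := by
  refine zeroNumber_mono_of_isSignCycle hv hg fun k X hX => ?_
  obtain ⟨Y, hY, hcrit⟩ := hX.exists_deriv_eq_zero hv hv'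
  have hsame : ∀ i, 0 < v (Y i) * g (Y i) := fun i => by
    have hslope : |deriv g (Y i)| < c := by simpa [hcrit i] using (hclose (Y i)).2
    exact mul_pos_of_abs_sub_lt_of_le_abs (hclose (Y i)).1 ((hc (Y i)).resolve_right hslope.not_ge)
  exact ⟨Y, hY.strictMono, hY.add_period, fun i =>
    mul_neg_of_mul_pos (hY.mul_neg i) (hsame i) (hsame (i + 1))⟩

end SimpleZerosStability

section SemilinearEquation

variable {f : ℝ → ℝ → ℝ → ℝ} {u v : ℝ → ℝ → ℝ} {e : ℝ → ℝ}

theorem IsEquilibrium.isClassicalSolution (he : IsEquilibrium f e) :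
    IsClassicalSolution f fun _ => e := by
  obtain ⟨hper, hsmooth, heq⟩ := he
  have hsmooth' : ContDiff ℝ 1 (deriv e) := (contDiff_succ_iff_deriv.1 hsmooth).2.2
  refine ⟨fun _ => hper, hsmooth.continuous.comp continuous_snd,
    fun _ _ => differentiableAt_const _, fun _ => hsmooth.differentiable two_ne_zero,
    fun _ => hsmooth'.differentiable one_ne_zero, by simpa using continuous_const,
    hsmooth'.continuous.comp continuous_snd, (hsmooth'.continuous_deriv le_rfl).comp continuous_snd,
    fun t x => by simp [heq]⟩

theorem IsClassicalSolution.comp_const_add (hu : IsClassicalSolution f u) (a : ℝ) :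
    IsClassicalSolution f fun t => u (a + t) := by
  obtain ⟨hper, hcont, htime, hspace, hspace', hcont_t, hcont_x, hcont_xx, heq⟩ := hu
  have htrans : Continuous fun q : ℝ × ℝ => (a + q.1, q.2) := by fun_prop
  have hderiv : ∀ t x, deriv (fun s => u (a + s) x) t = deriv (fun s => u s x) (a + t) :=
    fun t x => deriv_comp_const_add (fun s => u s x) a t
  refine ⟨fun t => hper (a + t), hcont.comp htrans, fun t x => ?_, fun t => hspace (a + t),
    fun t => hspace' (a + t), ?_, hcont_x.comp htrans, hcont_xx.comp htrans, fun t x => ?_⟩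
  · exact ((htime (a + t) x).hasDerivAt.comp_const_add a t).differentiableAt
  · simpa only [hderiv, Function.comp_def] using hcont_t.comp htrans
  · rw [hderiv, heq]

/-- On a compact set the jets of `u` and `v` stay in a compact set, where `f` is Lipschitz. -/
theorem IsClassicalSolution.isParabolic_sub
    (hf : LocallyLipschitz fun q : ℝ × ℝ × ℝ => f q.1 q.2.1 q.2.2)
    (hu : IsClassicalSolution f u) (hv : IsClassicalSolution f v) :
    IsParabolic fun t x => u t x - v t x := by
  obtain ⟨-, hu, hut, hux, huxx, -, hux_cont, -, hu_eq⟩ := hu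
  obtain ⟨-, hv, hvt, hvx, hvxx, -, hvx_cont, -, hv_eq⟩ := hv
  have hderiv : ∀ t, deriv (fun x => u t x - v t x) = fun x => deriv (u t) x - deriv (v t) x :=
    fun t => funext fun x => deriv_fun_sub (hux t x) (hvx t x)
  refine ⟨hu.sub hv, fun x t => (hut t x).fun_sub (hvt t x), fun t => (hux t).fun_sub (hvx t),
    fun t => ?_, ?_, fun K hK => ?_⟩
  · simpa only [hderiv] using (huxx t).fun_sub (hvxx t)
  · simpa only [hderiv] using hux_cont.fun_sub hvx_cont
  have hju : Continuous fun q : ℝ × ℝ => (q.2, u q.1 q.2, deriv (u q.1) q.2) := by fun_prop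
  have hjv : Continuous fun q : ℝ × ℝ => (q.2, v q.1 q.2, deriv (v q.1) q.2) := by fun_prop
  obtain ⟨L, hL⟩ := hf.locallyLipschitzOn.exists_lipschitzOnWith_of_compact
    ((hK.image hju).union (hK.image hjv))
  refine ⟨L, L.2, fun t x hq => ?_⟩
  have hlip := hL.dist_le_mul _ (Or.inl ⟨(t, x), hq, rfl⟩) _ (Or.inr ⟨(t, x), hq, rfl⟩)
  have hdist : dist (x, u t x, deriv (u t) x) (x, v t x, deriv (v t) x) ≤
      |u t x - v t x| + |deriv (u t) x - deriv (v t) x| := by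
    simp only [Prod.dist_eq, dist_self, Real.dist_eq]
    exact max_le (by positivity) (max_le_add_of_nonneg (abs_nonneg _) (abs_nonneg _))
  rw [hderiv, deriv_fun_sub (hut t x) (hvt t x), deriv_fun_sub (huxx t x) (hvxx t x), hu_eq, hv_eq]
  calc _ = dist (f x (u t x) (deriv (u t) x)) (f x (v t x) (deriv (v t) x)) := by
        rw [Real.dist_eq]; congr 1; ring
    _ ≤ L * dist (x, u t x, deriv (u t) x) (x, v t x, deriv (v t) x) := hlip
    _ ≤ _ := mul_le_mul_of_nonneg_left hdist L.2

theorem IsClassicalSolution.zeroNumber_sub_antitone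
    (hf : LocallyLipschitz fun q : ℝ × ℝ × ℝ => f q.1 q.2.1 q.2.2)
    (hu : IsClassicalSolution f u) (hv : IsClassicalSolution f v) :
    Antitone fun t => zeroNumber fun x => u t x - v t x :=
  (hu.isParabolic_sub hf hv).zeroNumber_antitone fun t => (hu.1 t).sub (hv.1 t)

end SemilinearEquation

section ConnectingOrbit

variable {f : ℝ → ℝ → ℝ → ℝ} {u v w : ℝ → ℝ → ℝ} {p : ℝ}

/-- Letting `t → ∞` along multiples of the period, `u - v` approaches `w 0 - v 0`, which bounds its
zero number from below. -/
theorem zeroNumber_sub_le_of_tendsto_atTop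
    (hf : LocallyLipschitz fun q : ℝ × ℝ × ℝ => f q.1 q.2.1 q.2.2)
    (hu : IsClassicalSolution f u) (hv : IsClassicalSolution f v)
    (hp : 0 < p) (hvp : ∀ t, v (t + p) = v t) (hwp : ∀ t, w (t + p) = w t)
    (hlim : ∀ x, Tendsto (fun t => u t x - w t x) atTop (𝓝 0)) (t : ℝ) :
    zeroNumber (fun x => w 0 x - v 0 x) ≤ zeroNumber (fun x => u t x - v t x) := by
  have htop : Tendsto (fun n : ℕ => n * p) atTop atTop :=
    tendsto_natCast_atTop_atTop.atTop_mul_const hp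
  refine zeroNumber_le_of_tendsto (ψ := fun (n : ℕ) x => u (n * p) x - v (n * p) x)
    (fun x => ?_) (Eventually.frequently (f := atTop) ?_)
  · have hv₀ : ∀ n : ℕ, v (n * p) = v 0 := fun n => Periodic.nat_mul_eq hvp n
    have hw₀ : ∀ n : ℕ, w (n * p) = w 0 := fun n => Periodic.nat_mul_eq hwp n
    have := ((hlim x).comp htop).add_const (w 0 x - v 0 x)
    simpa [Function.comp_def, hv₀, hw₀] using this
  · filter_upwards [htop.eventually_ge_atTop t] with n hn
    exact hu.zeroNumber_sub_antitone hf hv hn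

/-- At some time `t₀ > 0` the zeros of `v - w` are simple. As `t → -∞` along `t₀ - ℕ p`, the
difference `u - w` approaches `v t₀ - w t₀` in `C¹`, hence has no more sign changes than the
latter. -/
theorem zeroNumber_sub_le_of_tendsto_atBot
    (hf : LocallyLipschitz fun q : ℝ × ℝ × ℝ => f q.1 q.2.1 q.2.2)
    (hu : IsClassicalSolution f u) (hv : IsClassicalSolution f v) (hw : IsClassicalSolution f w)
    (hp : 0 < p) (hvp : ∀ t, v (t + p) = v t) (hwp : ∀ t, w (t + p) = w t) (hne : v 0 ≠ w 0)
    (hlim : ∀ ε > 0, ∀ᶠ t in atBot, ∀ x,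
      |u t x - v t x| < ε ∧ |deriv (u t) x - deriv (v t) x| < ε) (t : ℝ) :
    zeroNumber (fun x => u t x - w t x) ≤ zeroNumber (fun x => v 0 x - w 0 x) := by
  by_cases htop : zeroNumber (fun x => v 0 x - w 0 x) = ⊤
  · exact htop ▸ le_top
  have hpar := hv.isParabolic_sub hf hw
  have hper : ∀ t, Periodic (fun x => v t x - w t x) 1 := fun t => (hv.1 t).sub (hw.1 t)
  obtain ⟨t₀, ht₀, hsimple⟩ := hpar.exists_hasSimpleZerosOn_univ hper one_pos
    (fun h => hne (funext fun x => sub_eq_zero.1 (congrFun h x))) htop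
  obtain ⟨c, hc, hbound⟩ := hsimple.exists_pos_le_abs_or_le_abs_deriv (hper t₀)
    (hpar.differentiable t₀).continuous (hpar.continuous_deriv.comp (Continuous.prodMk_right t₀))
  have hbot : Tendsto (fun n : ℕ => t₀ - n * p) atTop atBot :=
    tendsto_atBot_add_const_left _ t₀
      (tendsto_neg_atTop_atBot.comp (tendsto_natCast_atTop_atTop.atTop_mul_const hp))
  obtain ⟨n, hclose, hn⟩ := ((hbot.eventually (hlim c hc)).and
    (hbot.eventually_le_atBot t)).exists
  have hv₀ : v (t₀ - n * p) = v t₀ := Periodic.sub_nat_mul_eq hvp n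
  have hw₀ : w (t₀ - n * p) = w t₀ := Periodic.sub_nat_mul_eq hwp n
  have hpar_u := hu.isParabolic_sub hf hw
  calc zeroNumber (fun x => u t x - w t x)
      ≤ zeroNumber (fun x => u (t₀ - n * p) x - w (t₀ - n * p) x) :=
        hu.zeroNumber_sub_antitone hf hw hn
    _ ≤ zeroNumber (fun x => v t₀ x - w t₀ x) :=
        zeroNumber_le_of_forall_abs_sub_lt (hper t₀) ((hu.1 _).sub (hw.1 _))
          (hpar_u.differentiable _) hbound fun x => by
            rw [deriv_fun_sub (hu.2.2.2.1 _ x) (hw.2.2.2.1 _ x),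
              deriv_fun_sub (hv.2.2.2.1 _ x) (hw.2.2.2.1 _ x), hw₀, sub_sub_sub_cancel_right,
              sub_sub_sub_cancel_right, ← hv₀]
            exact hclose x
    _ ≤ zeroNumber (fun x => v 0 x - w 0 x) := hv.zeroNumber_sub_antitone hf hw ht₀.1.le

end ConnectingOrbit

theorem zero_number_comparison_connecting_orbit_general {f : ℝ → ℝ → ℝ → ℝ}
    (hf : LocallyLipschitz fun q : ℝ × ℝ × ℝ => f q.1 q.2.1 q.2.2) {e : ℝ → ℝ}
    (he : IsEquilibrium f e) {γ : ℝ → ℝ → ℝ} {p : ℝ} (hγ : IsClassicalSolution f γ) (hp : 0 < p)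
    (hγp : ∀ t, γ (t + p) = γ t) {u : ℝ → ℝ → ℝ} (hu : IsClassicalSolution f u) {a : ℝ}
    (hγe : γ a ≠ e)
    (hconv_minus : ∀ ε > 0, ∀ᶠ t in atBot, ∀ x,
      |u t x - e x| < ε ∧ |deriv (u t) x - deriv e x| < ε)
    (hconv_plus : ∀ x, Tendsto (fun t => u t x - γ (a + t) x) atTop (𝓝 0)) (t : ℝ) :
    zeroNumber (fun x => u t x - γ (a + t) x) ≤ zeroNumber (fun x => γ a x - e x) ∧
      zeroNumber (fun x => γ a x - e x) ≤ zeroNumber (fun x => u t x - e x) := by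
  have he' := he.isClassicalSolution
  have hγ' := hγ.comp_const_add a
  have hγp' : ∀ t, γ (a + (t + p)) = γ (a + t) := fun t => by rw [← add_assoc, hγp]
  constructor
  · calc zeroNumber (fun x => u t x - γ (a + t) x) ≤ zeroNumber (fun x => e x - γ a x) := by
          simpa only [add_zero] using zeroNumber_sub_le_of_tendsto_atBot hf hu he' hγ' hp
            (fun _ => rfl) hγp' (by simpa only [add_zero] using hγe.symm) hconv_minus t
      _ = zeroNumber (fun x => γ a x - e x) := by
          simpa only [neg_sub] using zeroNumber_neg (φ := fun x => γ a x - e x)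
  · simpa only [add_zero] using zeroNumber_sub_le_of_tendsto_atTop hf hu he' hp (fun _ => rfl)
      hγp' hconv_plus t

end

/-- **Zero-number comparison along an orbit connecting an equilibrium to a periodic
orbit.**  If `u` is a bounded classical solution converging in `C¹(S¹)` to the
equilibrium `e⁻` as `t → -∞` and to `γ⁺(·,a+t)` as `t → +∞`, with `γ⁺(·,t) ≠ e⁻`,
`u(·,t) ≠ e⁻` and `u(·,t) ≠ γ⁺(·,a+t)` for all `t`, then for every `t`
`z(u(·,t) − γ⁺(·,a+t)) ≤ z(γ⁺(·,a) − e⁻) ≤ z(u(·,t) − e⁻)`. -/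
theorem zero_number_comparison_connecting_orbit
    (f : ℝ → ℝ → ℝ → ℝ)
    (hf_reg : ContDiff ℝ 2 (fun q : ℝ × ℝ × ℝ => f q.1 q.2.1 q.2.2))
    (hf_per : ∀ (x w q : ℝ), f (x + 1) w q = f x w q)
    (e : ℝ → ℝ) (he : IsEquilibrium f e)
    (γ : ℝ → ℝ → ℝ) (p : ℝ) (hγ : IsPeriodicSolution f γ p)
    (hγe : ∀ t, γ t ≠ e)
    (u : ℝ → ℝ → ℝ) (hu : IsClassicalSolution f u)
    (hu_bdd : ∃ C, ∀ t x : ℝ, |u t x| ≤ C)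
    (a : ℝ)
    -- ‖u(·,t) − e⁻‖_{C¹(S¹)} → 0 as t → −∞
    (hconv_minus : ∀ ε > (0:ℝ), ∃ T : ℝ, ∀ t ≤ T, ∀ x : ℝ,
      |u t x - e x| < ε ∧ |deriv (u t) x - deriv e x| < ε)
    -- ‖u(·,t) − γ⁺(·,a+t)‖_{C¹(S¹)} → 0 as t → +∞
    (hconv_plus : ∀ ε > (0:ℝ), ∃ T : ℝ, ∀ t ≥ T, ∀ x : ℝ,
      |u t x - γ (a + t) x| < ε ∧ |deriv (u t) x - deriv (γ (a + t)) x| < ε)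
    (hue : ∀ t, u t ≠ e)
    (huγ : ∀ t, u t ≠ γ (a + t)) :
    ∀ t : ℝ,
      zeroNumber (fun x => u t x - γ (a + t) x) ≤ zeroNumber (fun x => γ a x - e x)
      ∧ zeroNumber (fun x => γ a x - e x) ≤ zeroNumber (fun x => u t x - e x) := by
  obtain ⟨hγ_sol, hp, hγp, -⟩ := hγ
  exact zero_number_comparison_connecting_orbit_general
    (hf_reg.of_le one_le_two).locallyLipschitz he hγ_sol hp hγp hu (hγe a)
    (fun ε hε => Filter.eventually_atBot.2 (hconv_minus ε hε))
    fun x => Metric.tendsto_atTop.2 fun ε hε => (hconv_plus ε hε).imp fun T hT t ht => by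
      simpa only [Real.dist_eq, sub_zero] using (hT t ht x).1
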